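/- arXiv:1712.07456 — 4 statements merged into one kernel-verified Lean document; each statement's English description precedes it below -/
import Mathlib

section
/- $\int_{0}^{\infty} \frac{dt}{\left(1 + t + t^{\alpha}\right)^{2}} = \frac{2}{3}$, where $\alpha = \frac{1 + i\sqrt{3}}{2}$ and $t^{\alpha}$ denotes the principal complex power of the positive real number $t$. -/
/-!
The proof rests on the threefold symmetry of the exponents `0, 1, α`, the vertices of an
equilateral triangle in `ℂ`.

Substituting `t = e^s` turns the integral into `∫_ℝ f`, where
`f(s) = e^{-s} / (1 + e^{-s} + e^{(α-1)s})²`, and `f(-s)` is the complex conjugate of `f(s)` for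
real `s` (`kern_neg`). So the value is `I + conj I` with `I = ∫_0^∞ f` (`integral_eq_half_line`).

The function `f` is holomorphic on the closed convex sector `0 ≤ im s ≤ re s` and decays like
`e^{-re s}` there, so it has a primitive `F` on the sector, and `F(R) - F(R + iy) → 0` as
`R → ∞`. Hence `I` may be computed along the ray through `1 + α = √3 e^{iπ/6}`, which is the axis
on which `e^s` dominates the two other exponentials, these being conjugate up to a common factor.
With `u = e^{(α-2)x}` and `v = e^{-(1+α)x} = conj u`, one finds `f((1+α)x) = v / (1+u+v)²`, hence
`(1+α) f((1+α)x) + conj ((1+α) f((1+α)x)) = ((1+α) v + (2-α) u) / (1+u+v)²`,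
which is the derivative of `1/(1+u+v)`. This function equals `1/3` at `x = 0` and tends to
`1` at infinity, so `I + conj I = 1 - 1/3 = 2/3`.
-/

open Complex MeasureTheory Filter Topology Set
open scoped ComplexConjugate

/-- The exponent `α = e^{iπ/3}`. -/
noncomputable def al : ℂ := (1 + I * Real.sqrt 3) / 2

lemma al_re : al.re = 1 / 2 := by simp [al]

lemma al_im : al.im = Real.sqrt 3 / 2 := by simp [al]

lemma conj_al : conj al = 1 - al := by
  apply Complex.ext
  · simp [al_re]; norm_num
  · simp

lemma al_sq : al * al = al - 1 := by
  have h : Real.sqrt 3 * Real.sqrt 3 = 3 := Real.mul_self_sqrt (by norm_num)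
  apply Complex.ext
  · simp [al_re, al_im]; linarith
  · simp [al_re, al_im]; ring

lemma sqrt_three_bounds : 0 ≤ Real.sqrt 3 ∧ Real.sqrt 3 ≤ 2 :=
  ⟨Real.sqrt_nonneg 3, Real.sqrt_le_iff.mpr (by norm_num)⟩

/-- The factor `1 + t⁻¹ + t^{α-1}` of the denominator, at `t = e^s`. -/
noncomputable def den (s : ℂ) : ℂ := 1 + exp (-s) + exp ((al - 1) * s)

/-- The integrand in the variable `s = log t`, continued to complex `s`. -/
noncomputable def kern (s : ℂ) : ℂ := exp (-s) / den s ^ 2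

/-- The closed convex sector `0 ≤ arg s ≤ π/4` containing both rays used in the proof. -/
def sector : Set ℂ := {s | 0 ≤ s.im ∧ s.im ≤ s.re}

lemma sector_re_nonneg {s : ℂ} (hs : s ∈ sector) : 0 ≤ s.re := hs.1.trans hs.2

lemma convex_sector : Convex ℝ sector := by
  rintro x ⟨hx, hx'⟩ y ⟨hy, hy'⟩ a b ha hb -
  refine ⟨?_, ?_⟩
  · simp only [add_im, real_smul, mul_im, ofReal_re, ofReal_im, zero_mul, add_zero]
    positivity
  · simp only [add_im, add_re, real_smul, mul_im, mul_re, ofReal_re, ofReal_im, zero_mul, add_zero,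
      sub_zero]
    gcongr

lemma ofReal_mem_sector {x : ℝ} (hx : 0 ≤ x) : (x : ℂ) ∈ sector := by
  simpa [sector] using hx

lemma ray_mem_sector {x : ℝ} (hx : 0 ≤ x) : (1 + al) * x ∈ sector := by
  have h := sqrt_three_bounds
  constructor
  · simp [al_re, al_im]; nlinarith
  · simp [al_re, al_im]; nlinarith

lemma norm_den_ge {s : ℂ} (hs : s ∈ sector) :
    1 - Real.exp (-s.re) - Real.exp (-s.re / 2) ≤ ‖den s‖ := by
  have h1 : ‖exp (-s)‖ = Real.exp (-s.re) := by simp [norm_exp]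
  have h2 : ‖exp ((al - 1) * s)‖ ≤ Real.exp (-s.re / 2) := by
    rw [norm_exp]
    apply Real.exp_le_exp.mpr
    have := mul_nonneg sqrt_three_bounds.1 hs.1
    simp [al_re, al_im]; linarith
  have h3 : ‖(1 : ℂ)‖ ≤ ‖den s‖ + ‖exp (-s)‖ + ‖exp ((al - 1) * s)‖ := by
    have : (1 : ℂ) = den s - exp (-s) - exp ((al - 1) * s) := by simp only [den]; ring
    calc ‖(1 : ℂ)‖ = ‖den s - exp (-s) - exp ((al - 1) * s)‖ := congrArg _ this
      _ ≤ ‖den s - exp (-s)‖ + ‖exp ((al - 1) * s)‖ := norm_sub_le _ _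
      _ ≤ _ := by gcongr; exact norm_sub_le _ _
  rw [norm_one] at h3
  linarith

lemma exp_re_pos {w : ℂ} (h : |w.im| ≤ 1) : 0 < (exp w).re := by
  rw [exp_re]
  have h3 := Real.pi_gt_three
  have := abs_le.mp h
  exact mul_pos (Real.exp_pos _) (Real.cos_pos_of_mem_Ioo ⟨by linarith, by linarith⟩)

lemma den_ne_zero {s : ℂ} (hs : s ∈ sector) : den s ≠ 0 := by
  intro h0
  obtain ⟨h3, h3'⟩ := sqrt_three_bounds
  obtain ⟨hi, hir⟩ := hs
  rcases le_total s.re 1 with h | h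
  · -- near the origin all three summands have positive real part
    have a1 : 0 < (exp (-s)).re :=
      exp_re_pos (by rw [neg_im, abs_neg, abs_le]; constructor <;> linarith)
    have a2 : 0 < (exp ((al - 1) * s)).re := by
      apply exp_re_pos
      have e : ((al - 1) * s).im = Real.sqrt 3 / 2 * s.re - s.im / 2 := by
        simp [al_re, al_im]; ring
      rw [e, abs_le]
      constructor <;> nlinarith
    have := congrArg Complex.re h0
    simp only [den, add_re, one_re, zero_re] at this
    linarith
  · -- away from the origin the summand `1` dominates; the threshold is the golden ratio
    have hd := norm_den_ge ⟨hi, hir⟩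
    rw [h0, norm_zero] at hd
    have e2 : Real.exp (-s.re) = Real.exp (-s.re / 2) * Real.exp (-s.re / 2) := by
      rw [← Real.exp_add]; ring_nf
    have hp := Real.exp_pos (-s.re / 2)
    have hm : Real.exp (-s.re / 2) * Real.exp (s.re / 2) = 1 := by
      rw [← Real.exp_add]; ring_nf; simp
    have hq : 13 / 8 ≤ Real.exp (s.re / 2) := by
      have := Real.quadratic_le_exp_of_nonneg (x := s.re / 2) (by linarith)
      nlinarith
    have hz : Real.exp (-s.re / 2) ≤ 8 / 13 := by nlinarith
    rw [e2] at hd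
    nlinarith

lemma norm_kern_le {s : ℂ} (hs : s ∈ sector) (h2 : 2 ≤ s.re) :
    ‖kern s‖ ≤ 16 * Real.exp (-s.re) := by
  have hd := norm_den_ge hs
  have e2 : Real.exp (-s.re) = Real.exp (-s.re / 2) * Real.exp (-s.re / 2) := by
    rw [← Real.exp_add]; ring_nf
  have hp := Real.exp_pos (-s.re / 2)
  have hm : Real.exp (-s.re / 2) * Real.exp (s.re / 2) = 1 := by
    rw [← Real.exp_add]; ring_nf; simp
  have hq : 2 ≤ Real.exp (s.re / 2) := by
    have := Real.add_one_le_exp (s.re / 2)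
    linarith
  have hz : Real.exp (-s.re / 2) ≤ 1 / 2 := by nlinarith
  have hd' : 1 / 4 ≤ ‖den s‖ := by nlinarith
  rw [kern, norm_div, norm_pow, norm_exp, neg_re, div_le_iff₀ (by positivity)]
  have : 1 / 16 ≤ ‖den s‖ ^ 2 := by nlinarith
  nlinarith [Real.exp_pos (-s.re)]

lemma differentiableOn_kern : DifferentiableOn ℂ kern sector := by
  intro s hs
  have hd : DifferentiableAt ℂ den s := by unfold den; fun_prop
  exact ((by fun_prop : DifferentiableAt ℂ (fun s : ℂ => exp (-s)) s).div (hd.pow 2)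
    (pow_ne_zero 2 (den_ne_zero hs))).differentiableWithinAt

lemma continuousOn_kern_ofReal : ContinuousOn (fun x : ℝ => kern x) (Ici 0) :=
  differentiableOn_kern.continuousOn.comp continuous_ofReal.continuousOn
    fun _ hx => ofReal_mem_sector hx

lemma integrableOn_kern : IntegrableOn (fun x : ℝ => kern x) (Ioi 0) := by
  have hm : AEStronglyMeasurable (fun x : ℝ => kern x) (volume.restrict (Ioi 0)) :=
    (continuousOn_kern_ofReal.mono Ioi_subset_Ici_self).aestronglyMeasurable measurableSet_Ioi
  refine (integrable_norm_iff hm).mp ?_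
  refine integrable_of_isBigO_exp_neg (b := 1) one_pos continuousOn_kern_ofReal.norm ?_
  refine Asymptotics.IsBigO.of_bound 16 ?_
  filter_upwards [eventually_ge_atTop 2] with x hx
  have := norm_kern_le (ofReal_mem_sector (by linarith : (0 : ℝ) ≤ x)) (by simpa using hx)
  simpa using this

/-- Along the real axis, `s ↦ -s` (that is, `t ↦ 1/t`) conjugates the integrand. -/
lemma kern_neg (x : ℝ) : kern (-x) = conj (kern x) := by
  have e : conj (den x) = exp (-x) * den (-x) := by
    simp only [den, map_add, map_one, ← exp_conj, map_mul, map_sub, map_neg, conj_ofReal, conj_al,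
      mul_add, ← exp_add]
    ring_nf
    simp
    ring
  simp only [kern, map_div₀, map_pow, e, ← exp_conj, map_neg, conj_ofReal, neg_neg]
  have h : exp (x : ℂ) = (exp (-x : ℂ))⁻¹ := by rw [exp_neg, inv_inv]
  have hne := exp_ne_zero (-x : ℂ)
  rw [h, mul_pow]
  field_simp

lemma integrand_eq_kern (x : ℝ) :
    (Real.exp x) • (1 / (1 + ((Real.exp x : ℝ) : ℂ) + ((Real.exp x : ℝ) : ℂ) ^ al) ^ 2) = kern x := by
  have hne := exp_ne_zero (x : ℂ)
  have hc : ((Real.exp x : ℝ) : ℂ) ^ al = exp (al * x) := by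
    rw [cpow_def_of_ne_zero (by exact_mod_cast (Real.exp_pos x).ne'),
      ← ofReal_log (Real.exp_pos x).le, Real.log_exp, mul_comm]
  have hd : 1 + ((Real.exp x : ℝ) : ℂ) + exp (al * x) = exp x * den x := by
    simp only [den, mul_add, ← exp_add, ofReal_exp]
    ring_nf
    simp
    ring
  rw [hc, hd, kern, exp_neg, real_smul, ofReal_exp, mul_pow]
  field_simp

lemma integral_eq_half_line :
    ∫ t in Ioi (0 : ℝ), 1 / (1 + (t : ℂ) + (t : ℂ) ^ al) ^ 2
      = (∫ x in Ioi (0 : ℝ), kern x) + conj (∫ x in Ioi (0 : ℝ), kern x) := by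
  have hsub := integral_image_eq_integral_abs_deriv_smul (s := univ) MeasurableSet.univ
    (fun x _ => (Real.hasDerivAt_exp x).hasDerivWithinAt) Real.exp_injective.injOn
    (fun t : ℝ => 1 / (1 + (t : ℂ) + (t : ℂ) ^ al) ^ 2)
  simp only [image_univ, Real.range_exp, abs_of_pos (Real.exp_pos _), integrand_eq_kern,
    Measure.restrict_univ] at hsub
  have hconj : IntegrableOn (fun x : ℝ => kern (-x : ℝ)) (Ioi 0) := by
    simp only [ofReal_neg, kern_neg]
    exact (conjLIE.toContinuousLinearEquiv : ℂ →L[ℝ] ℂ).integrable_comp integrableOn_kern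
  have hleft : IntegrableOn (fun x : ℝ => kern x) (Iic 0) := by
    have := (integrableOn_Ici_iff_integrableOn_Ioi (by finiteness)).mpr hconj
    have := this.comp_neg
    simpa using this
  have hI := integral_comp_neg_Ioi 0 (fun x : ℝ => kern x)
  simp only [ofReal_neg, kern_neg, neg_zero, integral_conj] at hI
  rw [hsub, ← intervalIntegral.integral_Iic_add_Ioi hleft integrableOn_kern, ← hI, add_comm]

/-- A primitive on the sector has the same limit along both rays, since the vertical segment joining
`3x/2` to `(1+α)x` has length `O(x)` while `kern` is `O(e^{-3x/2})` on it. -/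
lemma primitive_sub_tendsto {F : ℂ → ℂ} (hF : ∀ s ∈ sector, HasDerivWithinAt F (kern s) sector s) :
    Tendsto (fun x : ℝ => F ((1 + al) * x) - F ((3 / 2 * x : ℝ))) atTop (𝓝 0) := by
  have hlim : Tendsto (fun x : ℝ => 16 * ((x : ℝ) ^ 1 * Real.exp (-x))) atTop (𝓝 0) := by
    simpa using (Real.tendsto_pow_mul_exp_neg_atTop_nhds_zero 1).const_mul 16
  refine squeeze_zero_norm' ?_ hlim
  filter_upwards [eventually_ge_atTop 2] with x hx
  have h3 := sqrt_three_bounds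
  have hconv : Convex ℝ (sector ∩ {s : ℂ | s.re = 3 / 2 * x}) :=
    convex_sector.inter (convex_hyperplane reCLM.isLinear _)
  have hb := hconv.norm_image_sub_le_of_norm_hasDerivWithin_le
    (f := F) (f' := kern) (x := ((3 / 2 * x : ℝ) : ℂ)) (y := (1 + al) * x)
    (C := 16 * Real.exp (-x))
    (fun s hs => (hF s hs.1).mono inter_subset_left)
    (fun s hs => by
      have hre : s.re = 3 / 2 * x := hs.2
      refine (norm_kern_le hs.1 (by linarith)).trans ?_
      gcongr
      linarith)
    ⟨ofReal_mem_sector (by linarith), by simp⟩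
    ⟨ray_mem_sector (by linarith), by simp [al_re]; norm_num⟩
  refine hb.trans ?_
  have hl : ‖(1 + al) * x - ((3 / 2 * x : ℝ) : ℂ)‖ ≤ x := by
    have : (1 + al) * x - ((3 / 2 * x : ℝ) : ℂ) = ((Real.sqrt 3 / 2 * x : ℝ) : ℂ) * I := by
      apply Complex.ext
      · simp [al_re]; ring
      · simp [al_im]
    rw [this, norm_mul, norm_I, mul_one, norm_real, Real.norm_eq_abs, abs_of_nonneg (by nlinarith)]
    nlinarith
  have := mul_le_mul_of_nonneg_left hl (by positivity : 0 ≤ 16 * Real.exp (-x))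
  linarith

/-- The function `1 / (1 + u + v)` of the variable `x`, whose derivative is twice the real part of
the integrand along the ray through `1 + α`. -/
noncomputable def prim (x : ℝ) : ℂ := 1 / den ((1 + al) * x)

lemma den_ray (x : ℝ) :
    den ((1 + al) * x) = 1 + exp (-(1 + al) * x) + exp ((al - 2) * x) := by
  have : (al - 1) * ((1 + al) * x) = (al - 2) * x := by linear_combination (x : ℂ) * al_sq
  rw [den, this, neg_mul]

lemma hasDerivAt_prim {x : ℝ} (hx : 0 ≤ x) :
    HasDerivAt prim ((1 + al) * kern ((1 + al) * x) + conj ((1 + al) * kern ((1 + al) * x))) x := by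
  have hne := den_ne_zero (ray_mem_sector hx)
  have hE (c : ℂ) : HasDerivAt (fun y : ℝ => exp (c * y)) (exp (c * x) * (c * 1)) x :=
    (ofRealCLM.hasDerivAt.const_mul c).cexp
  have hd : HasDerivAt (fun y : ℝ => den ((1 + al) * y))
      (exp (-(1 + al) * x) * (-(1 + al) * 1) + exp ((al - 2) * x) * ((al - 2) * 1)) x := by
    simp only [den_ray]
    exact ((hE _).const_add 1).add (hE _)
  have huv : conj (exp (-(1 + al) * x)) = exp ((al - 2) * x) := by
    rw [← exp_conj]; simp only [map_mul, map_neg, map_add, map_one, conj_al, conj_ofReal]; ring_nf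
  have hvu : conj (exp ((al - 2) * x)) = exp (-(1 + al) * x) := by rw [← huv, conj_conj]
  have hc : conj (den ((1 + al) * x)) = den ((1 + al) * x) := by
    rw [den_ray]; simp only [map_add, map_one, huv, hvu]; ring
  have hp := (hasDerivAt_const x (1 : ℂ)).div hd hne
  refine hp.congr_deriv ?_
  simp only [kern, map_mul, map_div₀, map_pow, hc, map_add, map_one, conj_al, ← neg_mul, huv]
  field_simp
  ring

lemma prim_zero : prim 0 = 1 / 3 := by
  simp [prim, den]; norm_num

lemma tendsto_prim : Tendsto prim atTop (𝓝 1) := by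
  have hE (c : ℂ) (hc : c.re < 0) : Tendsto (fun x : ℝ => exp (c * x)) atTop (𝓝 0) := by
    rw [tendsto_zero_iff_norm_tendsto_zero]
    simp only [norm_exp, mul_re, ofReal_re, ofReal_im, mul_zero, sub_zero]
    exact Real.tendsto_exp_atBot.comp (tendsto_id.const_mul_atTop_of_neg hc)
  have h : Tendsto (fun x : ℝ => den ((1 + al) * x)) atTop (𝓝 (1 + 0 + 0)) := by
    simp only [den_ray]
    exact (tendsto_const_nhds.add (hE _ (by simp [al_re]; norm_num))).add
      (hE _ (by simp [al_re]; norm_num))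
  have := (tendsto_const_nhds (x := (1 : ℂ))).div h (by simp)
  simp only [add_zero, div_one] at this
  exact this

lemma half_line_add_conj :
    (∫ x in Ioi (0 : ℝ), kern x) + conj (∫ x in Ioi (0 : ℝ), kern x) = 2 / 3 := by
  obtain ⟨F, hF⟩ := convex_sector.exists_forall_hasDerivWithinAt differentiableOn_kern
  -- restriction of `F` to the two rays
  have hreal (x : ℝ) (hx : 0 ≤ x) :
      HasDerivWithinAt (fun y : ℝ => F y) (kern x) (Ici 0) x := by
    have := (hF x (ofReal_mem_sector hx)).scomp x
      (ofRealCLM.hasDerivAt (x := x)).hasDerivWithinAt (s := Ici 0)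
      (fun y hy => ofReal_mem_sector hy)
    simpa [Function.comp_def] using this
  have hray (x : ℝ) (hx : 0 ≤ x) : HasDerivWithinAt (fun y : ℝ => F ((1 + al) * y))
      ((1 + al) * kern ((1 + al) * x)) (Ici 0) x := by
    have := (hF _ (ray_mem_sector hx)).scomp x
      ((ofRealCLM.hasDerivAt (x := x)).const_mul (1 + al)).hasDerivWithinAt (s := Ici 0)
      (fun y hy => ray_mem_sector hy)
    simpa [Function.comp_def] using this
  -- fundamental theorem of calculus along the slanted ray
  have hslant (x : ℝ) (hx : 0 ≤ x) :
      F ((1 + al) * x) - F 0 + conj (F ((1 + al) * x) - F 0) = prim x - 1 / 3 := by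
    have h := (convex_Ici (0 : ℝ)).norm_image_sub_le_of_norm_hasDerivWithin_le (C := 0)
      (fun y hy => ((hray y hy).add (hray y hy).star).sub
        (hasDerivAt_prim hy).hasDerivWithinAt)
      (fun y _ => by simp) (self_mem_Ici) hx
    simp only [zero_mul, norm_le_zero_iff, Pi.add_apply, Pi.sub_apply, ofReal_zero, mul_zero,
      prim_zero, RCLike.star_def] at h
    rw [map_sub]
    linear_combination h
  -- fundamental theorem of calculus along the real axis
  have hlim : Tendsto (fun x : ℝ => F ((3 / 2 * x : ℝ)) - F 0) atTop
      (𝓝 (∫ x in Ioi (0 : ℝ), kern x)) := by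
    have h32 : Tendsto (fun x : ℝ => 3 / 2 * x) atTop atTop :=
      tendsto_id.const_mul_atTop (by norm_num)
    refine (intervalIntegral_tendsto_integral_Ioi 0 integrableOn_kern h32).congr' ?_
    filter_upwards [eventually_ge_atTop 0] with x hx
    have hx' : (0 : ℝ) ≤ 3 / 2 * x := by linarith
    have hsub : uIcc 0 (3 / 2 * x) ⊆ Ici (0 : ℝ) := by
      rw [uIcc_of_le hx']; exact Icc_subset_Ici_self
    rw [intervalIntegral.integral_eq_sub_of_hasDeriv_right (f := fun y : ℝ => F y)
      (fun y hy => ((hreal y (hsub hy)).continuousWithinAt).mono hsub)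
      (fun y hy => ?_) (continuousOn_kern_ofReal.mono hsub).intervalIntegrable, ofReal_zero]
    rw [min_eq_left hx'] at hy
    exact (hreal y hy.1.le).mono (fun z hz => hy.1.le.trans (le_of_lt hz))
  have hlim2 : Tendsto (fun x : ℝ => F ((1 + al) * x) - F 0) atTop
      (𝓝 (∫ x in Ioi (0 : ℝ), kern x)) := by
    have := (primitive_sub_tendsto hF).add hlim
    rw [zero_add] at this
    exact this.congr fun x => by ring
  have hsum := hlim2.add ((continuous_conj.tendsto _).comp hlim2)
  have hprim : Tendsto (fun x : ℝ => prim x - 1 / 3) atTop (𝓝 (1 - 1 / 3)) :=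
    tendsto_prim.sub_const _
  have heq := tendsto_nhds_unique hsum (hprim.congr' (by
    filter_upwards [eventually_ge_atTop 0] with x hx using (hslant x hx).symm))
  rw [heq]; norm_num

/-- `∫₀^∞ dt / (1 + t + t^α)² = 2/3`, where `α = (1 + i√3)/2` and
`t^α` is the principal complex power. -/
theorem stmt_7 :
    ∫ t in Set.Ioi (0 : ℝ),
        1 / (1 + (t : ℂ) + (t : ℂ) ^ ((1 + Complex.I * Real.sqrt 3) / 2)) ^ 2
      = (2 / 3 : ℂ) :=
  integral_eq_half_line.trans half_line_add_conj
end

section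
/- $\int_{0}^{\infty} \frac{t^{\alpha - 1}\, dt}{\left(1 + t + t^{\alpha}\right)^{2}} = \frac{1}{3\alpha}$, where $\alpha = \frac{1 + i\sqrt{3}}{2}$ and $t^{\alpha-1}, t^{\alpha}$ denote principal complex powers of the positive real number $t$. -/
/-!
Write `α = e^{iπ/3}` (`al` below) and `β = conj α = 1 - α = α⁻¹` (`be`), and for complex `u` put
`N u = 1 + e^{-u} + e^{-αu}`. Substituting `t = e^{-r}` on `(0, 1)` and `t = e^{r}` on `(1, ∞)`
turns the integral into `q + conj m`, where
`q = ∫₀^∞ e^{-αr} / N(r)² dr` and `m = ∫₀^∞ F(r) dr`, `F u = e^{-u} e^{-αu} / N(u)²`.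

Two relations determine `q + conj m`.

* The derivative of `-e^{-αr} / N(r)` is `α e^{-αr} / N(r)² - β F(r)`, so `α q - β m = 1/3`
  (`exact_rel`).
* The values of `F` on the rays `ℝ₊` and `β ℝ₊` are conjugate: `F(βr) = conj F(r)` (`F_rot`).
  Since `F` is holomorphic and exponentially small on the closed convex sector `K` between these
  two rays, its integrals along them agree, that is `m = β conj m` (`integral_F_rotation`).

As `β² = -α`, the second relation gives `β m = -α conj m`, so `α (q + conj m) = 1/3`.

The analytic input is the bound `1/20 ≤ |N|` on `K` (`norm_N_ge`): close to the vertex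
both exponentials in `N` have nonnegative real part, and elsewhere their moduli add up to
at most `19/20`.
-/

namespace Stmt9

open MeasureTheory Set Filter Topology

/-! ### The sixth root of unity and the sector -/

/-- The exponent `α = e^{iπ/3}`. -/
noncomputable def al : ℂ := (1 + Complex.I * Real.sqrt 3) / 2
/-- The conjugate `β = e^{-iπ/3}` of `α`, which equals both `1 - α` and `α⁻¹`. -/
noncomputable def be : ℂ := (1 - Complex.I * Real.sqrt 3) / 2

lemma s3 : ((Real.sqrt 3 : ℝ) : ℂ) ^ 2 = 3 := by
  rw [← Complex.ofReal_pow, Real.sq_sqrt (by norm_num)]; norm_num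

lemma al_add_be : al + be = 1 := by unfold al be; ring

lemma al_mul_be : al * be = 1 := by
  unfold al be
  linear_combination (-(Complex.I^2) / 4) * s3 - 3 / 4 * Complex.I_sq

lemma al_re : al.re = 1 / 2 := by simp [al]
lemma al_im : al.im = Real.sqrt 3 / 2 := by simp [al]
lemma be_re : be.re = 1 / 2 := by simp [be]
lemma be_im : be.im = -(Real.sqrt 3 / 2) := by simp [be]; ring

lemma conj_al : (starRingEnd ℂ) al = be :=
  Complex.ext (by rw [Complex.conj_re, al_re, be_re]) (by rw [Complex.conj_im, al_im, be_im])

/-- The denominator `1 + t + t ^ α` at `t = e^{-u}`, as an entire function of `u`. -/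
noncomputable def N (u : ℂ) : ℂ := 1 + Complex.exp (-u) + Complex.exp (-(al * u))

/-- The function `e^{-u} e^{-αu} / N(u)²`, whose integral is rotated from `ℝ₊` to `β ℝ₊`. -/
noncomputable def F (u : ℂ) : ℂ := Complex.exp (-u) * Complex.exp (-(al * u)) / N u ^ 2

/-- The closed sector `-π/3 ≤ arg u ≤ 0`, parametrised by nonnegative coordinates with respect to
the basis `1, β`. -/
def K : Set ℂ := {u | ∃ a b : ℝ, 0 ≤ a ∧ 0 ≤ b ∧ u = a + b * be}

lemma convex_K : Convex ℝ K := by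
  rintro _ ⟨a, b, ha, hb, rfl⟩ _ ⟨c, d, hc, hd, rfl⟩ p q hp hq -
  refine ⟨p * a + q * c, p * b + q * d, by positivity, by positivity, ?_⟩
  simp only [Complex.real_smul]; push_cast; ring

lemma norm_exp1 (a b : ℝ) : ‖Complex.exp (-(a + b * be))‖ = Real.exp (-(a + b / 2)) := by
  rw [Complex.norm_exp]; simp [be_re]; ring_nf

lemma al_mul_pt (a b : ℝ) : al * (a + b * be) = b + a * al := by
  linear_combination (b : ℂ) * al_mul_be

lemma norm_exp2 (a b : ℝ) : ‖Complex.exp (-(al * (a + b * be)))‖ = Real.exp (-(b + a / 2)) := by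
  rw [al_mul_pt, Complex.norm_exp]; simp [al_re]; ring_nf

/-! ### The lower bound for the denominator -/

lemma exp_neg_sum_le {a b : ℝ} (h : 1.7 ≤ a) (hb : 0 ≤ b) :
    Real.exp (-(a + b / 2)) + Real.exp (-(b + a / 2)) ≤ 19 / 20 := by
  have key : ∀ x : ℝ, ∀ c : ℝ, 0 ≤ c → c ≤ x → Real.exp (-x) ≤ 1 / (1 + c) := by
    intro x c hc hx
    rw [Real.exp_neg, ← one_div]
    apply one_div_le_one_div_of_le (by positivity)
    linarith [Real.add_one_le_exp x]
  have h1 := key (a + b / 2) 1.7 (by norm_num) (by linarith)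
  have h2 := key (b + a / 2) 0.85 (by norm_num) (by linarith)
  have h3 : (1 : ℝ) / (1 + 1.7) + 1 / (1 + 0.85) ≤ 19 / 20 := by norm_num
  linarith

/-- `N` stays away from zero on the sector. The threshold `1.7` for the coordinates `a, b` is
small enough for `1.7 * √3 / 2 ≤ π / 2` and large enough for `exp_neg_sum_le`. -/
lemma norm_N_ge (a b : ℝ) (ha : 0 ≤ a) (hb : 0 ≤ b) : 1 / 20 ≤ ‖N (a + b * be)‖ := by
  have hbig : Real.exp (-(a + b / 2)) + Real.exp (-(b + a / 2)) ≤ 19 / 20 →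
      1 / 20 ≤ ‖N (a + b * be)‖ := by
    intro h
    have h1 : (1 : ℂ) = N (a + b * be) - (Complex.exp (-(a + b * be))
      + Complex.exp (-(al * (a + b * be)))) := by unfold N; ring
    have h2 : (1 : ℝ) ≤ ‖N (a + b * be)‖ + (Real.exp (-(a + b / 2)) + Real.exp (-(b + a / 2))) := by
      calc (1 : ℝ) = ‖(1 : ℂ)‖ := by simp
        _ ≤ ‖N (a + b * be)‖ + ‖(Complex.exp (-(a + b * be))
              + Complex.exp (-(al * (a + b * be))))‖ := by
            conv_lhs => rw [h1]
            exact norm_sub_le _ _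
        _ ≤ _ := by
            gcongr
            rw [← norm_exp1, ← norm_exp2]
            exact norm_add_le _ _
    linarith
  have hs : Real.sqrt 3 ≤ 1.75 := by
    rw [Real.sqrt_le_left (by norm_num)]; norm_num
  have hs0 : 0 ≤ Real.sqrt 3 := Real.sqrt_nonneg 3
  by_cases h1 : 1.7 ≤ a
  · exact hbig (exp_neg_sum_le h1 hb)
  by_cases h2 : 1.7 ≤ b
  · exact hbig (by rw [add_comm]; exact exp_neg_sum_le h2 ha)
  push Not at h1 h2
  have hcos : ∀ c : ℝ, 0 ≤ c → c < 1.7 → 0 ≤ Real.cos (c * (Real.sqrt 3 / 2)) := by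
    intro c hc0 hc
    apply Real.cos_nonneg_of_mem_Icc
    constructor
    · have : 0 ≤ c * (Real.sqrt 3 / 2) := by positivity
      linarith [Real.pi_pos]
    · nlinarith [Real.pi_gt_three]
  have hre : 1 ≤ (N (a + b * be)).re := by
    unfold N
    rw [al_mul_pt]
    simp only [Complex.add_re, Complex.exp_re, Complex.one_re, Complex.neg_re, Complex.neg_im,
      Complex.add_im, Complex.re_ofReal_mul, Complex.im_ofReal_mul, Complex.ofReal_im,
      Complex.ofReal_re, al_re, al_im, be_re, be_im, zero_add, mul_neg, neg_neg, Real.cos_neg]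
    have := hcos a ha h1
    have := hcos b hb h2
    have : 0 ≤ Real.exp (-(a + b * (1/2))) * Real.cos (b * (Real.sqrt 3 / 2)) := by positivity
    have : 0 ≤ Real.exp (-(b + a * (1/2))) * Real.cos (a * (Real.sqrt 3 / 2)) := by positivity
    linarith
  linarith [Complex.re_le_norm (N (a + b * be))]

lemma N_ne (a b : ℝ) (ha : 0 ≤ a) (hb : 0 ≤ b) : N (a + b * be) ≠ 0 := by
  have := norm_N_ge a b ha hb
  intro h; rw [h] at this; norm_num at this

lemma differentiable_N : Differentiable ℂ N := by unfold N; fun_prop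

lemma differentiableOn_F : DifferentiableOn ℂ F K := by
  rintro _ ⟨a, b, ha, hb, rfl⟩
  apply DifferentiableAt.differentiableWithinAt
  have := differentiable_N (a + b * be)
  unfold F
  refine DifferentiableAt.div (by fun_prop) (by fun_prop) (pow_ne_zero 2 (N_ne a b ha hb))

lemma div_N_le (a b : ℝ) (ha : 0 ≤ a) (hb : 0 ≤ b) (z : ℂ) :
    ‖z / N (a + b * be) ^ 2‖ ≤ 400 * ‖z‖ := by
  have := norm_N_ge a b ha hb
  have h2 : 1 / 400 ≤ ‖N (a + b * be)‖ ^ 2 := by nlinarith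
  rw [norm_div, norm_pow, div_le_iff₀ (by linarith)]
  nlinarith [norm_nonneg z]

lemma norm_F_le (a b : ℝ) (ha : 0 ≤ a) (hb : 0 ≤ b) :
    ‖F (a + b * be)‖ ≤ 400 * Real.exp (-(3 / 2 * (a + b))) := by
  refine (div_N_le a b ha hb _).trans_eq ?_
  rw [norm_mul, norm_exp1, norm_exp2, ← Real.exp_add]; ring_nf

/-- The symmetry behind the evaluation: multiplication by `β` exchanges the exponentials `e^{-u}`
and `e^{-αu}` up to conjugation, because `αβ = 1`. -/
lemma F_rot (r : ℝ) : F (r * be) = (starRingEnd ℂ) (F r) := by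
  unfold F N
  simp only [map_div₀, map_pow, map_mul, map_add, map_one, ← Complex.exp_conj, map_neg,
    Complex.conj_ofReal, conj_al]
  have h : al * (r * be) = r := by linear_combination (r : ℂ) * al_mul_be
  rw [h, mul_comm be, mul_comm (Complex.exp (-(r * be)))]
  ring_nf

lemma real_mem_K {r : ℝ} (hr : 0 ≤ r) : (r : ℂ) ∈ K := ⟨r, 0, hr, le_rfl, by simp⟩

lemma N_real_ne {r : ℝ} (hr : 0 ≤ r) : N r ≠ 0 := by
  simpa using N_ne r 0 hr le_rfl

lemma continuous_N : Continuous N := differentiable_N.continuous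

/-! ### Integrals along the positive half-line -/

lemma integrable_div {g : ℝ → ℂ} (hg : Continuous g) {c : ℝ} (hc : 0 < c)
    (hb : ∀ r : ℝ, ‖g r‖ = Real.exp (-(c * r))) :
    IntegrableOn (fun r : ℝ => g r / N r ^ 2) (Ioi 0) := by
  refine Integrable.mono' ((exp_neg_integrableOn_Ioi 0 hc).const_mul 400) ?_ ?_
  · refine ContinuousOn.aestronglyMeasurable ?_ measurableSet_Ioi
    refine ContinuousOn.div hg.continuousOn
      ((continuous_N.comp Complex.continuous_ofReal).pow 2).continuousOn ?_
    intro r hr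
    exact pow_ne_zero 2 (N_real_ne (le_of_lt hr))
  · filter_upwards [ae_restrict_mem measurableSet_Ioi] with r hr
    have := div_N_le r 0 (le_of_lt hr) le_rfl (g r)
    rw [hb] at this
    simpa using this

lemma norm_e1 (r : ℝ) : ‖Complex.exp (-(r : ℂ))‖ = Real.exp (-r) := by
  simpa using norm_exp1 r 0
lemma norm_e2 (r : ℝ) : ‖Complex.exp (-(al * r))‖ = Real.exp (-(r / 2)) := by
  simpa using norm_exp2 r 0

lemma integrable_F : IntegrableOn (fun r : ℝ => F r) (Ioi 0) := by
  refine integrable_div (g := fun r => Complex.exp (-r) * Complex.exp (-(al * r)))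
    (by fun_prop) (c := 3 / 2) (by norm_num) ?_
  intro r
  rw [norm_mul, norm_e1, norm_e2, ← Real.exp_add]; ring_nf

lemma integrable_Q : IntegrableOn (fun r : ℝ => Complex.exp (-(al * r)) / N r ^ 2) (Ioi 0) := by
  refine integrable_div (g := fun r => Complex.exp (-(al * r)))
    (by fun_prop) (c := 1 / 2) (by norm_num) ?_
  intro r
  rw [norm_e2]; ring_nf

/-- The integrand `α e^{-αr} / N² - β F` is the derivative of `-e^{-αr} / N`, which goes from
`-1/3` to `0`. -/
lemma exact_rel :
    al * (∫ r : ℝ in Ioi 0, Complex.exp (-(al * r)) / N r ^ 2) -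
      be * (∫ r : ℝ in Ioi 0, F r) = 1 / 3 := by
  rw [← integral_const_mul, ← integral_const_mul, ← integral_sub (integrable_Q.const_mul _)
    (integrable_F.const_mul _)]
  have hd : ∀ r : ℝ, 0 ≤ r → HasDerivAt (fun r : ℝ => -(Complex.exp (-(al * r)) / N r))
      (al * (Complex.exp (-(al * r)) / N r ^ 2) - be * F r) r := by
    intro r hr
    have h0 := N_real_ne hr
    have hN : HasDerivAt N (-Complex.exp (-r) - al * Complex.exp (-(al * r))) (r : ℂ) := by
      have h1 : HasDerivAt (fun u : ℂ => Complex.exp (-u)) (Complex.exp (-(r : ℂ)) * -1) (r : ℂ) :=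
        (hasDerivAt_id (r : ℂ)).neg.cexp
      have h2 : HasDerivAt (fun u : ℂ => Complex.exp (-(al * u)))
          (Complex.exp (-(al * r)) * -(al * 1)) (r : ℂ) :=
        ((hasDerivAt_id (r : ℂ)).const_mul al).neg.cexp
      convert! (h1.const_add 1).add h2 using 1
      ring
    have hZ : HasDerivAt (fun u : ℂ => Complex.exp (-(al * u)))
          (Complex.exp (-(al * r)) * -(al * 1)) (r : ℂ) :=
        ((hasDerivAt_id (r : ℂ)).const_mul al).neg.cexp
    have := (hZ.div hN h0).neg.comp_ofReal
    convert! this using 1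
    unfold F
    field_simp
    have hb : be = 1 - al := by linear_combination al_add_be
    rw [hb]
    unfold N
    ring
  have ht : Tendsto (fun r : ℝ => -(Complex.exp (-(al * r)) / N r)) atTop (𝓝 0) := by
    apply squeeze_zero_norm' (a := fun r : ℝ => 20 * Real.exp (-(r / 2)))
    · filter_upwards [eventually_ge_atTop 0] with r hr
      have h := norm_N_ge r 0 hr le_rfl
      simp only [Complex.ofReal_zero, zero_mul, add_zero] at h
      rw [norm_neg, norm_div, norm_e2, div_le_iff₀ (by linarith)]
      nlinarith [Real.exp_pos (-(r / 2))]
    · have : Tendsto (fun r : ℝ => r / 2) atTop atTop := tendsto_id.atTop_div_const (by norm_num)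
      simpa using (Real.tendsto_exp_neg_atTop_nhds_zero.comp this).const_mul 20
  rw [integral_Ioi_of_hasDerivAt_of_tendsto (hd 0 le_rfl).continuousAt.continuousWithinAt
    (fun r hr => hd r (le_of_lt hr))
    ((integrable_Q.const_mul _).sub (integrable_F.const_mul _)) ht]
  simp [N]; norm_num

/-! ### Rotation of the ray of integration -/

/-- The integrals of `F` along the two edges of the sector agree. With a primitive `P` of `F` on the
sector, their difference is the limit of `P(R) - P(βR)`, and `F` has size `O(e^{-3R/2})` on the
segment joining `βR` to `R`. -/
lemma integral_F_rotation :
    (∫ r : ℝ in Ioi 0, F r) = be * (starRingEnd ℂ) (∫ r : ℝ in Ioi 0, F r) := by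
  obtain ⟨P, hP⟩ := convex_K.exists_forall_hasDerivWithinAt differentiableOn_F
  have hbK : ∀ r : ℝ, 0 ≤ r → (r : ℂ) * be ∈ K := fun r hr => ⟨0, r, le_rfl, hr, by simp⟩
  have cF : ContinuousOn F K := differentiableOn_F.continuousOn
  have hray : ∀ d : ℂ, (∀ r : ℝ, 0 ≤ r → (r : ℂ) * d ∈ K) → ∀ R : ℝ, 0 ≤ R →
      ∫ r : ℝ in (0)..R, F (r * d) * d = P (R * d) - P 0 := by
    intro d hd R hR
    have h0 : P 0 = P ((0 : ℝ) * d) := by simp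
    rw [h0]
    refine intervalIntegral.integral_eq_sub_of_hasDeriv_right_of_le (f := fun r : ℝ => P (r * d))
      hR ?_ ?_ ?_
    · have : ContinuousOn P K := fun u hu => (hP u hu).continuousWithinAt
      refine this.comp (by fun_prop) ?_
      intro r hr; exact hd r hr.1
    · intro r hr
      have h1 : HasDerivWithinAt (fun r : ℝ => (r : ℂ) * d) d (Ioi r) r := by
        simpa using ((Complex.ofRealCLM.hasDerivAt (x := r)).mul_const d).hasDerivWithinAt
      have h2 := (hP _ (hd r hr.1.le)).scomp_of_eq (h := fun r : ℝ => (r : ℂ) * d) r h1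
        (fun x hx => hd x (hr.1.le.trans (le_of_lt hx))) rfl
      simpa [mul_comm, Function.comp_def] using h2
    · apply ContinuousOn.intervalIntegrable
      rw [uIcc_of_le hR]
      refine ContinuousOn.mul (cF.comp (by fun_prop) ?_) continuousOn_const
      intro r hr; exact hd r hr.1
  have h1 : Tendsto (fun R : ℝ => P R - P 0) atTop (𝓝 (∫ r : ℝ in Ioi 0, F r)) := by
    refine (intervalIntegral_tendsto_integral_Ioi 0 integrable_F tendsto_id).congr' ?_
    filter_upwards [eventually_ge_atTop 0] with R hR
    have := hray 1 (fun r hr => by simpa using real_mem_K hr) R hR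
    simpa using this
  have h2 : Tendsto (fun R : ℝ => P (R * be) - P 0) atTop
      (𝓝 (be * (starRingEnd ℂ) (∫ r : ℝ in Ioi 0, F r))) := by
    have h3 := (Complex.continuous_conj.tendsto _).comp
      (intervalIntegral_tendsto_integral_Ioi 0 integrable_F tendsto_id)
    refine (h3.const_mul be).congr' ?_
    filter_upwards [eventually_ge_atTop 0] with R hR
    rw [← hray be hbK R hR, intervalIntegral.integral_mul_const, mul_comm]
    congr 1
    simp only [F_rot, Function.comp, id]
    rw [intervalIntegral.integral_of_le hR, intervalIntegral.integral_of_le hR, integral_conj]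
  have h4 : Tendsto (fun R : ℝ => (P R - P 0) - (P (R * be) - P 0)) atTop (𝓝 0) := by
    apply squeeze_zero_norm'
      (a := fun R : ℝ => 400 * Real.exp (-(3 / 2 * R)) * (R * ‖1 - be‖))
    · filter_upwards [eventually_ge_atTop 0] with R hR
      -- on this segment the sector coordinates satisfy `a + b = R`, so `norm_F_le` is uniform
      have hsub : ∀ u ∈ segment ℝ ((R : ℂ) * be) R, ∃ a b : ℝ, 0 ≤ a ∧ 0 ≤ b ∧ a + b = R ∧
          u = a + b * be := by
        rintro _ ⟨p, q, hp, hq, hpq, rfl⟩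
        refine ⟨q * R, p * R, by positivity, by positivity, ?_, ?_⟩
        · linear_combination R * hpq
        · simp only [Complex.real_smul]; push_cast; ring
      have := Convex.norm_image_sub_le_of_norm_hasDerivWithin_le
        (s := segment ℝ ((R : ℂ) * be) R) (f := P) (f' := F)
        (C := 400 * Real.exp (-(3 / 2 * R))) (x := R * be) (y := R)
        (fun u hu => by
          obtain ⟨a, b, ha, hb, -, h⟩ := hsub u hu
          refine (hP u ⟨a, b, ha, hb, h⟩).mono ?_
          intro v hv
          obtain ⟨a, b, ha, hb, -, h⟩ := hsub v hv
          exact ⟨a, b, ha, hb, h⟩)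
        (fun u hu => by
          obtain ⟨a, b, ha, hb, hab, h⟩ := hsub u hu
          rw [h, ← hab]; exact norm_F_le a b ha hb)
        (convex_segment _ _) (left_mem_segment _ _ _) (right_mem_segment _ _ _)
      rw [show (R : ℂ) - R * be = R * (1 - be) by ring, norm_mul, Complex.norm_real,
        Real.norm_of_nonneg hR] at this
      simpa using this
    · have h := (Real.tendsto_pow_mul_exp_neg_atTop_nhds_zero 1).comp
        (tendsto_id.const_mul_atTop (show (0:ℝ) < 3 / 2 by norm_num))
      have h := h.const_mul (400 * ‖1 - be‖ * (2 / 3))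
      rw [mul_zero] at h
      refine h.congr fun R => ?_
      simp only [Function.comp, id]; ring
  exact sub_eq_zero.mp (tendsto_nhds_unique (h1.sub h2) h4)

/-! ### The substitution `t = e^s` -/

/-- On the real line, `conj F` is the integrand after `t = e^r`; here `β = 1 - α` is used. -/
lemma F_conj_eq (r : ℝ) : (starRingEnd ℂ) (F r) =
    Complex.exp (al * r) / (1 + Complex.exp r + Complex.exp (al * r)) ^ 2 := by
  unfold F N
  simp only [map_div₀, map_pow, map_mul, map_add, map_one, ← Complex.exp_conj, map_neg,
    Complex.conj_ofReal, conj_al]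
  have hb : be = 1 - al := by linear_combination al_add_be
  have e1 : Complex.exp (-(be * r)) = Complex.exp (al * r) * (Complex.exp r)⁻¹ := by
    rw [← Complex.exp_neg, ← Complex.exp_add, hb]; ring_nf
  rw [e1, Complex.exp_neg]
  have h0 := Complex.exp_ne_zero r
  have : 1 + (Complex.exp r)⁻¹ + Complex.exp (al * r) * (Complex.exp r)⁻¹ =
    (1 + Complex.exp r + Complex.exp (al * r)) * (Complex.exp r)⁻¹ := by
    field_simp; ring
  rw [this]
  field_simp

theorem main :
    ∫ t in Set.Ioi (0 : ℝ), (t : ℂ) ^ (al - 1) / (1 + (t : ℂ) + (t : ℂ) ^ al) ^ 2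
      = 1 / (3 * al) := by
  set f : ℝ → ℂ := fun t => (t : ℂ) ^ (al - 1) / (1 + (t : ℂ) + (t : ℂ) ^ al) ^ 2 with hf
  have hsub : ∫ t in Ioi (0 : ℝ), f t = ∫ s : ℝ, Real.exp s • f (Real.exp s) := by
    have := integral_image_eq_integral_abs_deriv_smul (s := univ) (f := Real.exp)
      (f' := Real.exp) MeasurableSet.univ (fun x _ => (Real.hasDerivAt_exp x).hasDerivWithinAt)
      Real.exp_injective.injOn f
    rw [image_univ, Real.range_exp] at this
    simpa using this
  have hpow : ∀ (s : ℝ) (z : ℂ), ((Real.exp s : ℝ) : ℂ) ^ z = Complex.exp (z * s) := by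
    intro s z
    rw [Complex.cpow_def_of_ne_zero (by exact_mod_cast (Real.exp_pos s).ne'),
      ← Complex.ofReal_log (Real.exp_pos s).le, Real.log_exp, mul_comm]
  have hg : ∀ s : ℝ, Real.exp s • f (Real.exp s) =
      Complex.exp (al * s) / (1 + Complex.exp s + Complex.exp (al * s)) ^ 2 := by
    intro s
    simp only [hf, hpow, Complex.real_smul]
    rw [Complex.ofReal_exp, ← mul_div_assoc, ← Complex.exp_add]
    ring_nf
  simp only [hg] at hsub
  have hneg : ∀ r : ℝ, Complex.exp (al * (-r : ℝ)) /
      (1 + Complex.exp (-r : ℝ) + Complex.exp (al * (-r : ℝ))) ^ 2 =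
      Complex.exp (-(al * r)) / N r ^ 2 := by
    intro r; simp [N]
  set g : ℝ → ℂ := fun s =>
    Complex.exp (al * s) / (1 + Complex.exp s + Complex.exp (al * s)) ^ 2 with hgdef
  have i1 : IntegrableOn g (Ioi 0) := by
    have : IntegrableOn (fun r : ℝ => (starRingEnd ℂ) (F r)) (Ioi 0) :=
      Complex.conjCLE.toContinuousLinearMap.integrable_comp integrable_F
    simpa only [F_conj_eq] using this
  have i2 : IntegrableOn g (Iic 0) := by
    have h := integrable_Q
    simp only [← hneg] at h
    rw [integrableOn_Iic_iff_integrableOn_Iio]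
    rw [← (Measure.measurePreserving_neg (volume : Measure ℝ)).integrableOn_comp_preimage
      (Homeomorph.neg ℝ).measurableEmbedding]
    simpa [Function.comp_def, hgdef] using h
  have e2 : ∫ s in Iic 0, g s = ∫ r : ℝ in Ioi 0, Complex.exp (-(al * r)) / N r ^ 2 := by
    have := integral_comp_neg_Ioi 0 g
    rw [neg_zero] at this
    rw [← this]
    simp only [hgdef, hneg]
  have e1 : ∫ s in Ioi 0, g s = (starRingEnd ℂ) (∫ r : ℝ in Ioi 0, F r) := by
    rw [← integral_conj]; simp only [F_conj_eq, hgdef]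
  rw [hsub, ← intervalIntegral.integral_Iic_add_Ioi i2 i1, e1, e2]
  have ex := exact_rel
  have rot := integral_F_rotation
  have hal : al ≠ 0 := left_ne_zero_of_mul_eq_one al_mul_be
  generalize (∫ r : ℝ in Ioi 0, Complex.exp (-(al * r)) / N r ^ 2) = q at *
  generalize (∫ r : ℝ in Ioi 0, F r) = m at *
  rw [eq_div_iff (by simpa using hal)]
  linear_combination 3 * ex + 3 * be * rot + 3 * (starRingEnd ℂ) m *
    ((be + 1) * al_add_be - al_mul_be)

end Stmt9

/-- `∫₀^∞ t^{α-1} dt / (1 + t + t^α)² = 1/(3α)`, where `α = (1 + i√3)/2`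
and `t^{α-1}`, `t^α` are principal complex powers. -/
theorem stmt_9 :
    ∫ t in Set.Ioi (0 : ℝ),
        (t : ℂ) ^ ((1 + Complex.I * Real.sqrt 3) / 2 - 1) /
          (1 + (t : ℂ) + (t : ℂ) ^ ((1 + Complex.I * Real.sqrt 3) / 2)) ^ 2
      = 1 / (3 * ((1 + Complex.I * Real.sqrt 3) / 2)) := by
  exact Stmt9.main
end

section
/- For every real number $b > 0$, $\int_{0}^{\infty} \frac{dx}{\prod_{k=0}^{\infty}\left(1 + \frac{x^{3}}{(k+b)^{3}}\right)} = \frac{4\pi\, \Gamma(3b)}{\sqrt{3}\, \Gamma(b)^{3}} \int_{-\infty}^{\infty} \frac{e^{i b \sqrt{3}\, x}}{\left(e^{x} + e^{-x} + e^{i\sqrt{3}\, x}\right)^{3b}}\, dx$, where $\left(e^{x} + e^{-x} + e^{i\sqrt{3}x}\right)^{3b}$ is the principal complex power (well defined since the base has real part at least $1$). -/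
/-!
Write `a n = n + b`. Both sides are evaluated as multiples of one absolutely convergent series,
whose `n`-th term is the residue at `x = -a n` of `∏ (1 + x³ / (k+b)³)⁻¹`, namely
`cubicRes b n = (-1)ⁿ |Γ(b + a n · e^{iπ/3})|² / (n! Γ(b)³)`.

*Left side.* A finite product `∏_{k<N} (1 + x³ / (a k)³)⁻¹` has an exact partial fraction expansion
(`prod_inv_partial_fractions`, from Lagrange interpolation), and
`∫₀^∞ dx / (1 + x³/c³) = 2πc / (3√3)`, so its integral is `2π/√3` times `∑_{n<N} finRes b N n`.
As `N → ∞` the integrals converge by domination with the first factor. Euler's limit formula for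
`Γ` gives `finRes b N n → cubicRes b n`, and `|finRes b N n|` is nondecreasing in `N > n`, hence
bounded by `|cubicRes b n|`; Tannery's theorem then gives `2π/√3 · ∑ cubicRes b n`
as soon as this series converges absolutely.

*Right side.* With `A = eˣ + e⁻ˣ ≥ 2` and `C = e^{i√3x}` of modulus `1`, the power `(A + C)^{-3b}`
expands in a binomial series in `C / A`. Each term integrates to a Beta integral
(`integral_exp_div_cpow`), which is `Γ(b)³ / (2Γ(3b)) · cubicRes b n`. Termwise integration is
allowed because the series of norms sums to `(A - 1)^{-3b} ≤ (A/2)^{-3b}`; this also yields the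
absolute convergence needed on the left.
-/

open Filter Topology MeasureTheory Set

/-! ### The integral of `1 / (1 + x³/c³)` and partial fractions -/

lemma integral_inv_one_add_cube_aux :
    IntegrableOn (fun x : ℝ => (1 + x ^ 3)⁻¹) (Ioi 0) ∧
      ∫ x in Ioi (0 : ℝ), (1 + x ^ 3)⁻¹ = 2 * Real.pi / (3 * Real.sqrt 3) := by
  have h3 : (0:ℝ) < Real.sqrt 3 := by positivity
  have h3' : Real.sqrt 3 ^ 2 = 3 := Real.sq_sqrt (by norm_num)
  -- an antiderivative on `[0, ∞)`
  set G : ℝ → ℝ := fun x => (1 / 6) * Real.log ((x + 1) ^ 2 / (x ^ 2 - x + 1)) +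
    (1 / Real.sqrt 3) * Real.arctan ((2 * x - 1) / Real.sqrt 3) with hG
  have hd : ∀ x ∈ Ici (0:ℝ), HasDerivAt G ((1 + x ^ 3)⁻¹) x := by
    intro x hx
    have hx : 0 ≤ x := hx
    have hq : 0 < x ^ 2 - x + 1 := by nlinarith [sq_nonneg (2 * x - 1)]
    have h1 : HasDerivAt (fun x : ℝ => (x + 1) ^ 2) (2 * (x + 1)) x := by
      simpa [Pi.pow_def] using ((hasDerivAt_id x).add_const 1).pow 2
    have h2 : HasDerivAt (fun x : ℝ => x ^ 2 - x + 1) (2 * x - 1) x := by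
      simpa using (((hasDerivAt_id x).pow 2).sub (hasDerivAt_id x)).add_const 1
    have h4 : HasDerivAt (fun x : ℝ => (2 * x - 1) / Real.sqrt 3) (2 / Real.sqrt 3) x := by
      simpa using (((hasDerivAt_id x).const_mul 2).sub_const 1).div_const (Real.sqrt 3)
    have h5 := (((h1.div h2 hq.ne').log (div_pos (by positivity) hq).ne').const_mul (1 / 6)).add
      (h4.arctan.const_mul (1 / Real.sqrt 3))
    refine h5.congr_deriv ?_
    have e1 : (1 / Real.sqrt 3) * (1 / (1 + ((2 * x - 1) / Real.sqrt 3) ^ 2) * (2 / Real.sqrt 3))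
        = 1 / (2 * (x ^ 2 - x + 1)) := by
      rw [div_pow, h3']
      have : 1 + (2 * x - 1) ^ 2 / 3 = 4 / 3 * (x ^ 2 - x + 1) := by ring
      rw [this]
      generalize x ^ 2 - x + 1 = y at hq
      field_simp
      rw [h3']; norm_num
    have e2 : (1 + x ^ 3) = (x + 1) * (x ^ 2 - x + 1) := by ring
    simp only [Pi.div_apply]
    rw [e1, e2]
    have : 0 < x + 1 := by linarith
    field_simp
    ring
  have hpos : ∀ x ∈ Ioi (0:ℝ), 0 ≤ (1 + x ^ 3)⁻¹ := by
    intro x hx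
    have hx : 0 < x := hx
    positivity
  have hlim : Tendsto G atTop (𝓝 ((1 / 6) * Real.log 1 + (1 / Real.sqrt 3) * (Real.pi / 2))) := by
    refine Tendsto.add (Tendsto.const_mul _ (Tendsto.log ?_ (by norm_num))) (Tendsto.const_mul _ ?_)
    · have hi : Tendsto (fun x : ℝ => x⁻¹) atTop (𝓝 0) := tendsto_inv_atTop_zero
      have : Tendsto (fun x : ℝ => (1 + x⁻¹) ^ 2 / (1 - x⁻¹ + x⁻¹ ^ 2)) atTop
          (𝓝 ((1 + 0) ^ 2 / (1 - 0 + 0 ^ 2))) :=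
        ((hi.const_add 1).pow 2).div ((hi.const_sub 1).add (hi.pow 2)) (by norm_num)
      norm_num at this
      refine this.congr' ?_
      filter_upwards [eventually_gt_atTop 0] with x hx
      have hq : 0 < x ^ 2 - x + 1 := by nlinarith [sq_nonneg (2 * x - 1)]
      have hq' : 0 < 1 - x⁻¹ + (x ^ 2)⁻¹ := by
        have : 1 - x⁻¹ + (x ^ 2)⁻¹ = (x ^ 2 - x + 1) / x ^ 2 := by field_simp
        rw [this]; positivity
      rw [div_eq_div_iff hq'.ne' hq.ne']
      field_simp
    · refine (Real.tendsto_arctan_atTop.mono_right nhdsWithin_le_nhds).comp ?_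
      refine Tendsto.atTop_div_const h3 ?_
      exact tendsto_atTop_add_const_right _ _ (tendsto_id.const_mul_atTop (by norm_num))
  refine ⟨integrableOn_Ioi_deriv_of_nonneg' hd hpos hlim, ?_⟩
  rw [integral_Ioi_of_hasDerivAt_of_nonneg' hd hpos hlim]
  have ha : Real.arctan (-(Real.sqrt 3)⁻¹) = - (Real.pi / 6) := by
    rw [Real.arctan_neg, Real.arctan_inv_sqrt_three]
  have h0 : G 0 = - (Real.pi / 6) / Real.sqrt 3 := by
    simp only [hG]
    norm_num
    rw [show -1 / Real.sqrt 3 = -(Real.sqrt 3)⁻¹ by ring, ha]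
    ring
  rw [h0, Real.log_one]
  field_simp
  ring

lemma integrable_inv_one_add_cube {c : ℝ} (hc : 0 < c) :
    IntegrableOn (fun x : ℝ => (1 + x ^ 3 / c ^ 3)⁻¹) (Ioi 0) := by
  have := (integrableOn_Ioi_comp_mul_left_iff (fun x : ℝ => (1 + x ^ 3)⁻¹) 0
    (inv_pos.2 hc)).2 (by simpa using integral_inv_one_add_cube_aux.1)
  refine this.congr_fun (fun x _ => ?_) measurableSet_Ioi
  simp only
  rw [mul_pow, inv_pow]; congr 2; ring

lemma integral_inv_one_add_cube {c : ℝ} (hc : 0 < c) :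
    ∫ x in Ioi (0 : ℝ), (1 + x ^ 3 / c ^ 3)⁻¹ = 2 * Real.pi / Real.sqrt 3 * (c / 3) := by
  have := integral_comp_mul_left_Ioi (fun x : ℝ => (1 + x ^ 3)⁻¹) 0 (inv_pos.2 hc)
  rw [mul_zero, integral_inv_one_add_cube_aux.2] at this
  calc _ = ∫ x in Ioi (0 : ℝ), (1 + (c⁻¹ * x) ^ 3)⁻¹ := by
        congr 1 with x
        rw [mul_pow, inv_pow]; congr 2; ring
    _ = _ := by
        rw [this, inv_inv, smul_eq_mul]
        field_simp

/-- Partial fractions of `∏ (1 + z / c i)⁻¹`: the Lagrange basis polynomials at the nodes `c i` sum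
to `1`, and evaluating them at `-z` gives the identity. -/
lemma prod_inv_partial_fractions {ι : Type*} [DecidableEq ι] {s : Finset ι} (hs : s.Nonempty)
    {c : ι → ℝ} (hc : ∀ i, 0 < c i) (hinj : Function.Injective c) {z : ℝ} (hz : 0 ≤ z) :
    (∏ i ∈ s, (1 + z / c i))⁻¹
      = ∑ i ∈ s, (∏ j ∈ s.erase i, (1 - c i / c j)⁻¹) * (1 + z / c i)⁻¹ := by
  have h := congrArg (Polynomial.eval (-z)) (Lagrange.sum_basis (hinj.injOn (s := s)) hs)
  simp only [Polynomial.eval_finsetSum, Polynomial.eval_one, Lagrange.basis,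
    Polynomial.eval_prod, Lagrange.basisDivisor, Polynomial.eval_mul, Polynomial.eval_C,
    Polynomial.eval_sub, Polynomial.eval_X] at h
  have hp : ∀ i, 0 < 1 + z / c i := fun i => by have := hc i; positivity
  rw [inv_eq_iff_eq_inv, eq_comm, inv_eq_iff_eq_inv]
  refine eq_inv_of_mul_eq_one_left ?_
  refine Eq.trans ?_ h
  rw [Finset.sum_mul]
  refine Finset.sum_congr rfl fun i hi => ?_
  rw [← Finset.mul_prod_erase s _ hi, mul_assoc, inv_mul_cancel_left₀ (hp i).ne',
    ← Finset.prod_mul_distrib]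
  refine Finset.prod_congr rfl fun j hj => ?_
  have hne : c i ≠ c j := fun e => (Finset.ne_of_mem_erase hj) (hinj e).symm
  have h1 : c i - c j ≠ 0 := sub_ne_zero.2 hne
  have h2 : c j - c i ≠ 0 := sub_ne_zero.2 hne.symm
  have h3 := (hc j).ne'
  have h4 : 1 - c i / c j = (c j - c i) / c j := by field_simp
  rw [h4, inv_div, inv_mul_eq_div, div_mul_eq_mul_div, div_eq_div_iff h2 h1]
  field_simp
  ring

/-! ### A Beta integral over the real line -/

lemma hasDerivAt_exp_div (x : ℝ) :
    HasDerivAt (fun x : ℝ => Real.exp x / (Real.exp x + Real.exp (-x)))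
      (2 * (Real.exp x / (Real.exp x + Real.exp (-x))) *
        (Real.exp (-x) / (Real.exp x + Real.exp (-x)))) x := by
  have h1 := Real.hasDerivAt_exp x
  have h2 : HasDerivAt (fun x : ℝ => Real.exp (-x)) (-Real.exp (-x)) x := by
    simpa using (hasDerivAt_neg x).exp
  have hp : 0 < Real.exp x + Real.exp (-x) := by positivity
  refine (h1.div (h1.add h2) hp.ne').congr_deriv ?_
  simp only [Pi.add_apply]
  field_simp
  ring

lemma exp_div_image :
    (fun x : ℝ => Real.exp x / (Real.exp x + Real.exp (-x))) '' univ = Ioo 0 1 := by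
  ext y
  simp only [image_univ, mem_range, mem_Ioo]
  constructor
  · rintro ⟨x, rfl⟩
    refine ⟨by positivity, ?_⟩
    rw [div_lt_one (by positivity)]
    linarith [Real.exp_pos (-x)]
  · rintro ⟨h0, h1⟩
    have hy : 0 < 1 - y := by linarith
    refine ⟨Real.log (y / (1 - y)) / 2, ?_⟩
    set x := Real.log (y / (1 - y)) / 2 with hx
    have h : Real.exp x * Real.exp x = y / (1 - y) := by
      rw [← Real.exp_add, hx, add_halves, Real.exp_log (by positivity)]
    have h' : Real.exp x * (1 - y) = y * Real.exp (-x) := by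
      rw [Real.exp_neg]
      field_simp
      field_simp at h
      linarith
    rw [div_eq_iff (by positivity)]
    linarith

/-- The Beta integrand `t^(p-1) (1-t)^(q-1)` under the substitution `t = eˣ / (eˣ + e⁻ˣ)`, for which
`1 - t = e⁻ˣ / (eˣ + e⁻ˣ)` and `dt = 2 t (1-t) dx`. -/
lemma beta_integrand_subst (p q : ℂ) (x : ℝ) :
    |2 * (Real.exp x / (Real.exp x + Real.exp (-x))) *
        (Real.exp (-x) / (Real.exp x + Real.exp (-x)))| •
      (((Real.exp x / (Real.exp x + Real.exp (-x)) : ℝ) : ℂ) ^ (p - 1) *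
        (1 - ((Real.exp x / (Real.exp x + Real.exp (-x)) : ℝ) : ℂ)) ^ (q - 1))
    = 2 * (Complex.exp ((p - q) * x) / ((Real.exp x + Real.exp (-x) : ℝ) : ℂ) ^ (p + q)) := by
  have hA : 0 < Real.exp x + Real.exp (-x) := by positivity
  have e1 : (1 - ((Real.exp x / (Real.exp x + Real.exp (-x)) : ℝ) : ℂ))
      = ((Real.exp (-x) / (Real.exp x + Real.exp (-x)) : ℝ) : ℂ) := by
    rw [← Complex.ofReal_one, ← Complex.ofReal_sub]
    congr 1
    field_simp
    ring
  -- `(eᵗ / A)^(s-1) * (eᵗ / A) = e^{ts} / A^s`, used with `t = x` and `t = -x`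
  have key : ∀ (t : ℝ) (s : ℂ), ((Real.exp t / (Real.exp x + Real.exp (-x)) : ℝ) : ℂ) ^ (s - 1) *
      ((Real.exp t / (Real.exp x + Real.exp (-x)) : ℝ) : ℂ)
      = Complex.exp (t * s) / ((Real.exp x + Real.exp (-x) : ℝ) : ℂ) ^ s := by
    intro t s
    have hne : ((Real.exp t / (Real.exp x + Real.exp (-x)) : ℝ) : ℂ) ≠ 0 := by
      rw [Complex.ofReal_ne_zero]; positivity
    rw [Complex.cpow_sub _ _ hne, Complex.cpow_one, div_mul_cancel₀ _ hne,
      Complex.cpow_def_of_ne_zero hne, Complex.cpow_def_of_ne_zero (by exact_mod_cast hA.ne'),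
      ← Complex.exp_sub, ← Complex.ofReal_log (by positivity), ← Complex.ofReal_log hA.le,
      Real.log_div (by positivity) hA.ne', Real.log_exp]
    congr 1
    push_cast
    ring
  have hAc : ((Real.exp x + Real.exp (-x) : ℝ) : ℂ) ≠ 0 := by exact_mod_cast hA.ne'
  rw [e1, abs_of_pos (by positivity), Complex.real_smul, Complex.cpow_add _ _ hAc,
    sub_mul, Complex.exp_sub]
  have k1 := key x p
  have k2 := key (-x) q
  calc _ = 2 * ((((Real.exp x / (Real.exp x + Real.exp (-x)) : ℝ) : ℂ) ^ (p - 1) *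
      ((Real.exp x / (Real.exp x + Real.exp (-x)) : ℝ) : ℂ)) *
      (((Real.exp (-x) / (Real.exp x + Real.exp (-x)) : ℝ) : ℂ) ^ (q - 1) *
      ((Real.exp (-x) / (Real.exp x + Real.exp (-x)) : ℝ) : ℂ))) := by push_cast; ring
    _ = _ := by
      rw [k1, k2]
      rw [show ((-x : ℝ) : ℂ) * q = -(q * x) by push_cast; ring, Complex.exp_neg, mul_comm (x:ℂ) p]
      field_simp

lemma integral_exp_div_cpow {p q : ℂ} (hp : 0 < p.re) (hq : 0 < q.re) :
    Integrable (fun x : ℝ =>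
      Complex.exp ((p - q) * x) / ((Real.exp x + Real.exp (-x) : ℝ) : ℂ) ^ (p + q)) ∧
    ∫ x : ℝ, Complex.exp ((p - q) * x) / ((Real.exp x + Real.exp (-x) : ℝ) : ℂ) ^ (p + q)
      = Complex.Gamma p * Complex.Gamma q / (2 * Complex.Gamma (p + q)) := by
  set φ : ℝ → ℝ := fun x : ℝ => Real.exp x / (Real.exp x + Real.exp (-x)) with hφ
  have hd : ∀ x ∈ (univ : Set ℝ), HasDerivWithinAt φ _ univ x :=
    fun x _ => (hasDerivAt_exp_div x).hasDerivWithinAt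
  have hinj : InjOn φ univ := by
    have : StrictMono φ := strictMono_of_deriv_pos fun x => by
      rw [(hasDerivAt_exp_div x).deriv]; positivity
    exact this.injective.injOn
  set g : ℝ → ℂ := fun t => (t : ℂ) ^ (p - 1) * (1 - (t : ℂ)) ^ (q - 1) with hg
  have hint : IntegrableOn g (φ '' univ) := by
    rw [exp_div_image]
    have := Complex.betaIntegral_convergent hp hq
    rw [intervalIntegrable_iff_integrableOn_Ioo_of_le zero_le_one] at this
    exact this
  have hval : ∫ t in φ '' univ, g t = Complex.Gamma p * Complex.Gamma q / Complex.Gamma (p + q) := by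
    rw [exp_div_image, ← Complex.betaIntegral_eq_Gamma_mul_div p q hp hq, Complex.betaIntegral,
      intervalIntegral.integral_of_le zero_le_one, integral_Ioc_eq_integral_Ioo]
  rw [integrableOn_image_iff_integrableOn_abs_deriv_smul MeasurableSet.univ hd hinj] at hint
  rw [integral_image_eq_integral_abs_deriv_smul MeasurableSet.univ hd hinj] at hval
  simp only [hg, hφ, beta_integrand_subst, integrableOn_univ, setIntegral_univ] at hint hval
  constructor
  · simpa using hint.const_mul (1 / 2)
  · rw [integral_const_mul] at hval
    rw [mul_comm (2:ℂ), ← div_div, ← hval]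
    ring

/-! ### The binomial series of `(1 - z) ^ (-c)` -/

/-- The coefficient `(c)ₙ / n! = Γ(c+n) / (n! Γ(c))` of `zⁿ` in `(1 - z) ^ (-c)`, for `c > 0`. -/
noncomputable def binCoeff (c : ℝ) (n : ℕ) : ℝ :=
  Real.Gamma (c + n) / (n.factorial * Real.Gamma c)

lemma binCoeff_nonneg {c : ℝ} (hc : 0 < c) (n : ℕ) : 0 ≤ binCoeff c n := by
  have h1 := Real.Gamma_pos_of_pos hc
  have h2 := Real.Gamma_pos_of_pos (show 0 < c + n by positivity)
  unfold binCoeff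
  positivity

lemma ringChoose_eq_binCoeff {c : ℝ} (hc : 0 < c) (n : ℕ) :
    Ring.choose ((c : ℂ) + n - 1) n = (binCoeff c n : ℂ) := by
  have h := Ring.factorial_nsmul_multichoose_eq_ascPochhammer (c : ℂ) n
  have hG := Complex.Gamma_add_nat_div_Gamma_eq (n := n) (c : ℂ) (fun k hk => by
    have := congrArg Complex.re hk
    simp at this
    have : (0:ℝ) ≤ k := by positivity
    linarith)
  have hf : (n.factorial : ℂ) ≠ 0 := by exact_mod_cast n.factorial_ne_zero
  rw [← Ring.multichoose_eq]
  rw [nsmul_eq_mul, ← Polynomial.ascPochhammer_smeval_cast ℂ, ← Polynomial.eval_eq_smeval, ← hG] at h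
  rw [eq_div_of_mul_eq hf ((mul_comm _ _).trans h), binCoeff]
  push_cast [← Complex.Gamma_ofReal]
  rw [div_div, mul_comm (Complex.Gamma _)]

lemma hasSum_binCoeff {c : ℝ} (hc : 0 < c) {z : ℂ} (hz : ‖z‖ < 1) :
    HasSum (fun n => (binCoeff c n : ℂ) * z ^ n) ((1 - z) ^ (-c : ℂ)) := by
  have h := (Complex.one_div_one_sub_cpow_hasFPowerSeriesOnBall_zero (c : ℂ)).hasSum (y := z)
    (by rw [← ENNReal.ofReal_one, Metric.eball_ofReal]; simpa using hz)
  simp only [FormalMultilinearSeries.ofScalars_apply_eq, zero_add, ringChoose_eq_binCoeff hc,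
    smul_eq_mul, one_div] at h
  rwa [Complex.cpow_neg]

lemma hasSum_binCoeff_real {c : ℝ} (hc : 0 < c) {z : ℝ} (hz : |z| < 1) :
    HasSum (fun n => binCoeff c n * z ^ n) ((1 - z) ^ (-c)) := by
  have h := hasSum_binCoeff hc (z := z) (by simpa using hz)
  have h1 : (0:ℝ) ≤ 1 - z := by linarith [(abs_lt.1 hz).2]
  have e : (1 - (z:ℂ)) ^ (-c : ℂ) = (((1 - z) ^ (-c) : ℝ) : ℂ) := by
    rw [Complex.ofReal_cpow h1]; push_cast; rfl
  rw [e] at h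
  exact_mod_cast h

/-! ### The residues and their finite analogues -/

/-- The point `b + (n + b) e^{iπ/3}`, in Cartesian coordinates. -/
noncomputable def gammaArg (b : ℝ) (n : ℕ) : ℂ := ⟨b + (n + b) / 2, Real.sqrt 3 * (n + b) / 2⟩

/-- The residue `(-1)ⁿ |Γ(b + (n+b) e^{iπ/3})|² / (n! Γ(b)³)` of `∏ (1 + x³ / (k+b)³)⁻¹` at
`x = -(n+b)`. -/
noncomputable def cubicRes (b : ℝ) (n : ℕ) : ℝ :=
  (-1) ^ n * Complex.normSq (Complex.Gamma (gammaArg b n)) / (n.factorial * Real.Gamma b ^ 3)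

/-- The residue at `x = -(n+b)` of the finite product `∏_{k<N} (1 + x³ / (k+b)³)⁻¹`, for `n < N`. -/
noncomputable def finRes (b : ℝ) (N n : ℕ) : ℝ :=
  (n + b) / 3 * ∏ j ∈ (Finset.range N).erase n, (1 - ((n : ℝ) + b) ^ 3 / ((j : ℝ) + b) ^ 3)⁻¹

lemma prod_erase_sub (n m : ℕ) :
    ∏ j ∈ (Finset.range (n + m + 1)).erase n, ((j : ℝ) - n)
      = (-1) ^ n * n.factorial * m.factorial := by
  induction m with
  | zero =>
    have : (Finset.range (n + 0 + 1)).erase n = Finset.range n := by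
      ext j; simp; omega
    rw [this, ← Finset.prod_range_reflect]
    have h : ∀ j ∈ Finset.range n, (((n - 1 - j : ℕ) : ℝ) - n) = (-1) * ((j + 1 : ℕ) : ℝ) := by
      intro j hj
      have hj := Finset.mem_range.1 hj
      have e : ((n - 1 - j : ℕ) : ℝ) = n - 1 - j := by
        rw [Nat.sub_sub, Nat.cast_sub (by omega)]; push_cast; ring
      rw [e]; push_cast; ring
    rw [Finset.prod_congr rfl h, Finset.prod_mul_distrib, Finset.prod_const, Finset.card_range,
      ← Nat.cast_prod, Finset.prod_range_add_one_eq_factorial]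
    simp
  | succ m ih =>
    have : (Finset.range (n + (m + 1) + 1)).erase n
        = insert (n + m + 1) ((Finset.range (n + m + 1)).erase n) := by
      ext j; simp; omega
    rw [this, Finset.prod_insert (by simp), ih, Nat.factorial_succ]
    push_cast
    ring

/-- For `s = gammaArg b n`, `|s + j|² = (a j)² + a j · a n + (a n)²` with `a j = j + b`; this is
the quadratic cofactor of `a j - a n` in `(a j)³ - (a n)³`. -/
lemma normSq_GammaSeq (b : ℝ) (n : ℕ) {N : ℕ} (hN : 0 < N) :
    Complex.normSq (Complex.GammaSeq (gammaArg b n) N)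
      = (N : ℝ) ^ (3 * b) * N ^ n * (N.factorial : ℝ) ^ 2 /
        ∏ j ∈ Finset.range (N + 1),
          (((j : ℝ) + b) ^ 2 + (j + b) * (n + b) + ((n : ℝ) + b) ^ 2) := by
  have hN' : (0:ℝ) < N := by exact_mod_cast hN
  rw [Complex.GammaSeq, map_div₀, map_mul, map_prod]
  congr 1
  · rw [Complex.normSq_natCast, Complex.normSq_eq_norm_sq, Complex.norm_natCast_cpow_of_pos hN,
      ← Real.rpow_natCast, ← Real.rpow_mul hN'.le, ← Real.rpow_natCast (N:ℝ) n,
      ← Real.rpow_add hN', ← pow_two]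
    congr 2
    simp only [gammaArg]; push_cast; ring
  · refine Finset.prod_congr rfl fun j _ => ?_
    rw [Complex.normSq_apply]
    have h3 : Real.sqrt 3 * Real.sqrt 3 = 3 := Real.mul_self_sqrt (by norm_num)
    simp only [gammaArg, Complex.add_re, Complex.add_im, Complex.natCast_re, Complex.natCast_im]
    linear_combination (n + b) ^ 2 / 4 * h3

/-- Finite residues in terms of Euler's approximations to `Γ`, obtained by factoring
`(j+b)³ - (n+b)³` and separating the three resulting products. -/
lemma finRes_eq {b : ℝ} (hb : 0 < b) {n N : ℕ} (hn : n ≤ N) (hN : 0 < N) :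
    finRes b (N + 1) n = (-1) ^ n / n.factorial *
      (Complex.normSq (Complex.GammaSeq (gammaArg b n) N) / Real.GammaSeq b N ^ 3) *
      (N.descFactorial n / (N : ℝ) ^ n) := by
  obtain ⟨m, rfl⟩ := Nat.exists_eq_add_of_le hn
  have hN' : (0:ℝ) < (n + m : ℕ) := by exact_mod_cast hN
  have hmem : n ∈ Finset.range (n + m + 1) := by simp
  have ha : ∀ j : ℕ, 0 < (j : ℝ) + b := fun j => by positivity
  have hq : ∀ j : ℕ, 0 < ((j : ℝ) + b) ^ 2 + (j + b) * (n + b) + ((n : ℝ) + b) ^ 2 := fun j => by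
    have := ha j; have := ha n; positivity
  have h1 : ∀ j ∈ (Finset.range (n + m + 1)).erase n,
      (1 - ((n : ℝ) + b) ^ 3 / ((j : ℝ) + b) ^ 3)⁻¹ = ((j : ℝ) + b) ^ 3 /
        (((j : ℝ) - n) * (((j : ℝ) + b) ^ 2 + (j + b) * (n + b) + ((n : ℝ) + b) ^ 2)) := by
    intro j _
    have := (ha j).ne'
    rw [one_sub_div (by positivity), inv_div]
    congr 1
    ring
  have hb' : ∀ j ∈ Finset.range (n + m + 1), b + (j:ℝ) = j + b := fun j _ => add_comm _ _
  have hfac : ((n + m).factorial : ℝ) = m.factorial * (n + m).descFactorial n := by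
    rw [← Nat.factorial_mul_descFactorial hn, Nat.add_sub_cancel_left]; push_cast; rfl
  rw [finRes, Finset.prod_congr rfl h1, Finset.prod_div_distrib, Finset.prod_mul_distrib,
    prod_erase_sub, normSq_GammaSeq b n hN, Real.GammaSeq, Finset.prod_congr rfl hb',
    Finset.prod_pow, ← Finset.mul_prod_erase _ (fun j : ℕ => (j:ℝ) + b) hmem,
    ← Finset.mul_prod_erase _ (fun j : ℕ => ((j : ℝ) + b) ^ 2 + (j + b) * (n + b) + ((n : ℝ) + b) ^ 2)
      hmem]
  have hPa : 0 < ∏ j ∈ (Finset.range (n + m + 1)).erase n, ((j : ℝ) + b) :=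
    Finset.prod_pos fun j _ => ha j
  have hPq : 0 < ∏ j ∈ (Finset.range (n + m + 1)).erase n,
      (((j : ℝ) + b) ^ 2 + (j + b) * (n + b) + ((n : ℝ) + b) ^ 2) :=
    Finset.prod_pos fun j _ => hq j
  generalize ∏ j ∈ (Finset.range (n + m + 1)).erase n, ((j : ℝ) + b) = Pa at hPa ⊢
  generalize ∏ j ∈ (Finset.range (n + m + 1)).erase n,
      (((j : ℝ) + b) ^ 2 + (j + b) * (n + b) + ((n : ℝ) + b) ^ 2) = Pq at hPq ⊢
  have e3 : ((n + m : ℕ) : ℝ) ^ (3 * b) = (((n + m : ℕ) : ℝ) ^ b) ^ 3 := by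
    rw [← Real.rpow_natCast, ← Real.rpow_mul hN'.le]; congr 1; push_cast; ring
  have hrp : 0 < ((n + m : ℕ) : ℝ) ^ b := Real.rpow_pos_of_pos hN' _
  have hd : (0:ℝ) < (n + m).descFactorial n := by
    exact_mod_cast Nat.descFactorial_pos.2 hn
  rw [e3, hfac]
  have hsgn : ((-1 : ℝ) ^ n) * (-1) ^ n = 1 := by rw [← mul_pow]; simp
  have hsgn0 : ((-1 : ℝ) ^ n) ≠ 0 := by positivity
  have hinv : ((-1 : ℝ) ^ n)⁻¹ = (-1) ^ n := inv_eq_of_mul_eq_one_left hsgn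
  have hpn : (0:ℝ) < ((n + m : ℕ) : ℝ) ^ n := by positivity
  generalize ((n + m : ℕ) : ℝ) ^ b = rp at *
  generalize ((n + m : ℕ) : ℝ) ^ n = pn at *
  have han := ha n
  generalize (n : ℝ) + b = a at *
  generalize (-1 : ℝ) ^ n = sg at *
  have hn0 : (0:ℝ) < n.factorial := by positivity
  have hm0 : (0:ℝ) < m.factorial := by positivity
  generalize (n.factorial : ℝ) = x1 at *
  generalize (m.factorial : ℝ) = x2 at *
  generalize ((n + m).descFactorial n : ℝ) = x3 at *
  have : a ^ 2 + a * a + a ^ 2 = 3 * a ^ 2 := by ring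
  rw [this]
  field_simp
  linear_combination (-1) * hsgn

lemma tendsto_finRes {b : ℝ} (hb : 0 < b) (n : ℕ) :
    Tendsto (fun N => finRes b (N + 1) n) atTop (𝓝 (cubicRes b n)) := by
  have h1 : Tendsto (fun N => Complex.normSq (Complex.GammaSeq (gammaArg b n) N)) atTop
      (𝓝 (Complex.normSq (Complex.Gamma (gammaArg b n)))) :=
    (Complex.continuous_normSq.tendsto _).comp (Complex.GammaSeq_tendsto_Gamma _)
  have h2 := (Real.GammaSeq_tendsto_Gamma b).pow 3
  have hG := Real.Gamma_pos_of_pos hb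
  have h3 : Tendsto (fun N : ℕ => (N.descFactorial n / (N : ℝ) ^ n)) atTop (𝓝 1) := by
    have := isEquivalent_descFactorial n
    rw [Asymptotics.isEquivalent_iff_tendsto_one] at this
    · exact this
    · filter_upwards [eventually_gt_atTop 0] with N hN
      positivity
  have h4 := (((h1.div h2 (by positivity)).const_mul ((-1) ^ n / (n.factorial : ℝ))).mul h3)
  have e : cubicRes b n = (-1) ^ n / (n.factorial : ℝ) *
      (Complex.normSq (Complex.Gamma (gammaArg b n)) / Real.Gamma b ^ 3) * 1 := by
    rw [cubicRes, mul_one, div_mul_div_comm]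
  rw [e]
  refine h4.congr' ?_
  filter_upwards [eventually_ge_atTop n, eventually_gt_atTop 0] with N hn hN
  simp only [Pi.div_apply]
  rw [finRes_eq hb hn hN]

/-- `|finRes b N n|` is nondecreasing in `N > n`, since each new factor
`(1 - (n+b)³ / (N+b)³)⁻¹` is at least `1`; hence it is bounded by its limit. -/
lemma abs_finRes_le {b : ℝ} (hb : 0 < b) {n N : ℕ} (hn : n < N) :
    |finRes b N n| ≤ |cubicRes b n| := by
  have hmono : Monotone fun k => |finRes b (n + 1 + k) n| := by
    refine monotone_nat_of_le_succ fun k => ?_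
    have hs : (Finset.range (n + 1 + (k + 1))).erase n
        = insert (n + 1 + k) ((Finset.range (n + 1 + k)).erase n) := by
      ext j; simp; omega
    have e : finRes b (n + 1 + (k + 1)) n = finRes b (n + 1 + k) n *
        (1 - ((n : ℝ) + b) ^ 3 / (((n + 1 + k : ℕ) : ℝ) + b) ^ 3)⁻¹ := by
      rw [finRes, hs, Finset.prod_insert (by simp), finRes]
      ring
    rw [e, abs_mul]
    refine le_mul_of_one_le_right (abs_nonneg _) ?_
    refine le_trans ?_ (le_abs_self _)
    have h0 : (0:ℝ) < n + b := by positivity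
    have h1 : ((n : ℝ) + b) ^ 3 / (((n + 1 + k : ℕ) : ℝ) + b) ^ 3 < 1 := by
      rw [div_lt_one (by positivity)]
      refine pow_lt_pow_left₀ ?_ h0.le (by norm_num)
      push_cast
      have : (0:ℝ) ≤ k := by positivity
      linarith
    have h2 : 0 ≤ ((n : ℝ) + b) ^ 3 / (((n + 1 + k : ℕ) : ℝ) + b) ^ 3 := by positivity
    exact (one_le_inv₀ (by linarith)).2 (by linarith)
  have ht : Tendsto (fun k => |finRes b (n + 1 + k) n|) atTop (𝓝 |cubicRes b n|) := by
    have := (tendsto_finRes hb n).abs.comp (tendsto_add_atTop_nat n)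
    refine this.congr fun k => ?_
    simp only [Function.comp]
    rw [show k + n + 1 = n + 1 + k by ring]
  obtain ⟨k, rfl⟩ := Nat.exists_eq_add_of_lt hn
  have := hmono.ge_of_tendsto ht k
  rwa [show n + k + 1 = n + 1 + k by ring]

/-! ### Expansion of the right-hand integral -/

lemma gammaArg_re_pos {b : ℝ} (hb : 0 < b) (n : ℕ) : 0 < (gammaArg b n).re := by
  simp only [gammaArg]; positivity

lemma gammaArg_add_conj (b : ℝ) (n : ℕ) :
    gammaArg b n + (starRingEnd ℂ) (gammaArg b n) = ((3 * b + n : ℝ) : ℂ) := by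
  apply Complex.ext <;> simp [gammaArg]
  ring

lemma gammaArg_sub_conj (b : ℝ) (n : ℕ) :
    gammaArg b n - (starRingEnd ℂ) (gammaArg b n) = Complex.I * Real.sqrt 3 * (b + n) := by
  apply Complex.ext <;> simp [gammaArg]
  ring

/-- The `n`-th term of the binomial expansion of `e^{ib√3x} (eˣ + e⁻ˣ + e^{i√3x})^{-3b}` in powers of
`e^{i√3x} / (eˣ + e⁻ˣ)`, written in the shape of the integrand of `integral_exp_div_cpow` with
`p = gammaArg b n` and `q` its conjugate; `seriesTerm_eq` is the other form. -/
noncomputable def seriesTerm (b : ℝ) (n : ℕ) (x : ℝ) : ℂ :=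
  (binCoeff (3 * b) n * (-1) ^ n : ℝ) *
    (Complex.exp ((gammaArg b n - (starRingEnd ℂ) (gammaArg b n)) * x) /
      ((Real.exp x + Real.exp (-x) : ℝ) : ℂ) ^ (gammaArg b n + (starRingEnd ℂ) (gammaArg b n)))

lemma two_le_exp_add (x : ℝ) : 2 ≤ Real.exp x + Real.exp (-x) := by
  have := Real.one_le_cosh x
  rw [Real.cosh_eq] at this
  linarith

lemma seriesTerm_eq {b : ℝ} (n : ℕ) (x : ℝ) :
    seriesTerm b n x = Complex.exp (Complex.I * b * Real.sqrt 3 * x) *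
      ((Real.exp x + Real.exp (-x) : ℝ) : ℂ) ^ (-((3 * b : ℝ) : ℂ)) *
      (binCoeff (3 * b) n * (-(Complex.exp (Complex.I * Real.sqrt 3 * x) /
        ((Real.exp x + Real.exp (-x) : ℝ) : ℂ))) ^ n) := by
  have hA := two_le_exp_add x
  have hAc : ((Real.exp x + Real.exp (-x) : ℝ) : ℂ) ≠ 0 := by
    rw [Complex.ofReal_ne_zero]; linarith
  rw [seriesTerm, gammaArg_add_conj, gammaArg_sub_conj]
  generalize ((Real.exp x + Real.exp (-x) : ℝ) : ℂ) = A at *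
  rw [Complex.cpow_neg, neg_pow (_ / A), div_pow, ← Complex.exp_nat_mul]
  rw [show ((3 * b + n : ℝ) : ℂ) = ((3 * b : ℝ) : ℂ) + n by push_cast; ring,
    Complex.cpow_add _ _ hAc, Complex.cpow_natCast]
  rw [show Complex.I * Real.sqrt 3 * ((b : ℂ) + n) * x
    = Complex.I * b * Real.sqrt 3 * x + n * (Complex.I * Real.sqrt 3 * x) by ring, Complex.exp_add]
  push_cast
  field_simp

lemma norm_exp_I_mul (x : ℝ) : ‖Complex.exp (Complex.I * Real.sqrt 3 * x)‖ = 1 := by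
  rw [show Complex.I * Real.sqrt 3 * x = ((Real.sqrt 3 * x : ℝ) : ℂ) * Complex.I by
    push_cast; ring, Complex.norm_exp_ofReal_mul_I]

lemma norm_exp_I_mul' (b x : ℝ) : ‖Complex.exp (Complex.I * b * Real.sqrt 3 * x)‖ = 1 := by
  rw [show Complex.I * b * Real.sqrt 3 * x = ((b * Real.sqrt 3 * x : ℝ) : ℂ) * Complex.I by
    push_cast; ring, Complex.norm_exp_ofReal_mul_I]

lemma hasSum_seriesTerm {b : ℝ} (hb : 0 < b) (x : ℝ) :
    HasSum (fun n => seriesTerm b n x) (Complex.exp (Complex.I * b * Real.sqrt 3 * x) /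
          (Complex.exp x + Complex.exp (-x) +
            Complex.exp (Complex.I * Real.sqrt 3 * x)) ^ ((3 * b : ℝ) : ℂ)) := by
  have hA := two_le_exp_add x
  have hA0 : 0 < Real.exp x + Real.exp (-x) := by linarith
  have hAc : ((Real.exp x + Real.exp (-x) : ℝ) : ℂ) ≠ 0 := by
    rw [Complex.ofReal_ne_zero]; linarith
  set A := Real.exp x + Real.exp (-x) with hAdef
  set C := Complex.exp (Complex.I * Real.sqrt 3 * x) with hC
  have hz : ‖-(C / (A : ℂ))‖ < 1 := by
    rw [norm_neg, norm_div, hC, norm_exp_I_mul, Complex.norm_real, Real.norm_of_nonneg hA0.le,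
      div_lt_one hA0]
    linarith
  have h := (hasSum_binCoeff (show 0 < 3 * b by positivity) hz).mul_left
    (Complex.exp (Complex.I * b * Real.sqrt 3 * x) * (A : ℂ) ^ (-((3 * b : ℝ) : ℂ)))
  simp only [hAdef, hC, ← seriesTerm_eq] at h
  simp only [← hAdef, ← hC] at h
  have hne : 1 - -(C / (A : ℂ)) ≠ 0 := by
    intro h0
    rw [sub_eq_zero] at h0
    rw [← h0] at hz
    simp at hz
  have e : Complex.exp x + Complex.exp (-x) + C = (A : ℂ) * (1 - -(C / (A : ℂ))) := by
    rw [sub_neg_eq_add, mul_add, mul_div_cancel₀ _ hAc, hAdef]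
    push_cast
    ring
  have e2 : ((A : ℂ) * (1 - -(C / (A : ℂ)))) ^ ((3 * b : ℝ) : ℂ)
      = (A : ℂ) ^ ((3 * b : ℝ) : ℂ) * (1 - -(C / (A : ℂ))) ^ ((3 * b : ℝ) : ℂ) := by
    rw [Complex.cpow_def_of_ne_zero (mul_ne_zero hAc hne), Complex.cpow_def_of_ne_zero hAc,
      Complex.cpow_def_of_ne_zero hne, ← Complex.exp_add, Complex.log_ofReal_mul hA0 hne,
      Complex.ofReal_log hA0.le, add_mul]
  rw [e, e2]
  rw [Complex.cpow_neg, Complex.cpow_neg, mul_assoc, ← mul_inv, ← div_eq_mul_inv] at h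
  exact h

lemma norm_seriesTerm {b : ℝ} (hb : 0 < b) (n : ℕ) (x : ℝ) :
    ‖seriesTerm b n x‖ = (Real.exp x + Real.exp (-x)) ^ (-(3 * b)) *
      (binCoeff (3 * b) n * ((Real.exp x + Real.exp (-x))⁻¹) ^ n) := by
  have hA := two_le_exp_add x
  have hA0 : 0 < Real.exp x + Real.exp (-x) := by linarith
  rw [seriesTerm_eq, norm_mul, norm_mul, norm_mul, norm_pow, norm_neg, norm_div, norm_exp_I_mul,
    norm_exp_I_mul', Complex.norm_real, Complex.norm_real, Real.norm_of_nonneg hA0.le,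
    Real.norm_of_nonneg (binCoeff_nonneg (by positivity) n),
    Complex.norm_cpow_eq_rpow_re_of_pos hA0, one_mul, one_div]
  simp

lemma integrable_seriesTerm {b : ℝ} (hb : 0 < b) (n : ℕ) : Integrable (seriesTerm b n) := by
  have hp := gammaArg_re_pos hb n
  exact (integral_exp_div_cpow hp (q := (starRingEnd ℂ) (gammaArg b n)) (by simpa using hp)).1.const_mul _

lemma integral_seriesTerm {b : ℝ} (hb : 0 < b) (n : ℕ) :
    ∫ x, seriesTerm b n x
      = (cubicRes b n * (Real.Gamma b ^ 3 / (2 * Real.Gamma (3 * b))) : ℝ) := by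
  have hp := gammaArg_re_pos hb n
  have h := (integral_exp_div_cpow hp (q := (starRingEnd ℂ) (gammaArg b n))
    (by simpa using hp)).2
  unfold seriesTerm
  rw [integral_const_mul, h, Complex.Gamma_conj, Complex.mul_conj, gammaArg_add_conj,
    Complex.Gamma_ofReal]
  norm_cast
  have h1 := Real.Gamma_pos_of_pos hb
  have h2 := Real.Gamma_pos_of_pos (show 0 < 3 * b by positivity)
  have h3 := Real.Gamma_pos_of_pos (show 0 < 3 * b + n by positivity)
  rw [binCoeff, cubicRes]
  push_cast
  field_simp

/-- The norms sum to `A^{-3b} (1 - 1/A)^{-3b} ≤ A^{-3b} (1/2)^{-3b}` with `A = eˣ + e⁻ˣ ≥ 2`, which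
is integrable; so the partial sums of the integrals are bounded. -/
lemma summable_integral_norm_seriesTerm {b : ℝ} (hb : 0 < b) :
    Summable fun n => ∫ x, ‖seriesTerm b n x‖ := by
  have hc : 0 < 3 * b := by positivity
  -- up to the factor `binCoeff (3 * b) 0 = 1`, this is the norm of the term `n = 0`
  have hi0 : Integrable fun x : ℝ => (Real.exp x + Real.exp (-x)) ^ (-(3 * b)) := by
    refine (integrable_seriesTerm hb 0).norm.congr (Eventually.of_forall fun x => ?_)
    have := Real.Gamma_pos_of_pos hc
    simp only [norm_seriesTerm hb, binCoeff]
    simp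
    field_simp
  refine summable_of_sum_range_le (c := ∫ x : ℝ,
    (Real.exp x + Real.exp (-x)) ^ (-(3 * b)) * (1 / 2) ^ (-(3 * b)))
    (fun n => integral_nonneg fun x => norm_nonneg _) fun N => ?_
  rw [← integral_finsetSum _ fun n _ => (integrable_seriesTerm hb n).norm]
  refine integral_mono (integrable_finsetSum _ fun n _ => (integrable_seriesTerm hb n).norm)
    (hi0.mul_const _) fun x => ?_
  have hA := two_le_exp_add x
  simp only [norm_seriesTerm hb]
  rw [← Finset.mul_sum]
  refine mul_le_mul_of_nonneg_left ?_ (by positivity)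
  have hinv : (Real.exp x + Real.exp (-x))⁻¹ ≤ 1 / 2 := by
    rw [one_div]; exact inv_anti₀ (by norm_num) hA
  have hpos : 0 < (Real.exp x + Real.exp (-x))⁻¹ := by positivity
  refine (sum_le_hasSum _ (fun n _ => mul_nonneg (binCoeff_nonneg hc n) (by positivity))
    (hasSum_binCoeff_real hc (abs_lt.2 ⟨by linarith, by linarith⟩))).trans ?_
  exact Real.rpow_le_rpow_of_nonpos (by norm_num) (by linarith) (by linarith)

lemma hasSum_cubicRes {b : ℝ} (hb : 0 < b) :
    HasSum (fun n => ((cubicRes b n * (Real.Gamma b ^ 3 / (2 * Real.Gamma (3 * b))) : ℝ) : ℂ))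
      (∫ x : ℝ, Complex.exp (Complex.I * b * Real.sqrt 3 * x) /
          (Complex.exp x + Complex.exp (-x) +
            Complex.exp (Complex.I * Real.sqrt 3 * x)) ^ ((3 * b : ℝ) : ℂ)) := by
  have h := hasSum_integral_of_summable_integral_norm (integrable_seriesTerm hb)
    (summable_integral_norm_seriesTerm hb)
  simpa only [integral_seriesTerm hb, (hasSum_seriesTerm hb _).tsum_eq] using h

lemma summable_cubicRes {b : ℝ} (hb : 0 < b) : Summable (cubicRes b) := by
  have h := (Complex.summable_ofReal.1 (hasSum_cubicRes hb).summable)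
  have h1 := Real.Gamma_pos_of_pos hb
  have h2 := Real.Gamma_pos_of_pos (show 0 < 3 * b by positivity)
  exact (summable_mul_right_iff (by positivity)).1 h

/-! ### The left-hand integral as a limit -/

lemma integral_finite_prod {b : ℝ} (hb : 0 < b) (N : ℕ) :
    ∫ x in Ioi (0 : ℝ), (∏ k ∈ Finset.range (N + 1), (1 + x ^ 3 / ((k : ℝ) + b) ^ 3))⁻¹
      = 2 * Real.pi / Real.sqrt 3 * ∑ n ∈ Finset.range (N + 1), finRes b (N + 1) n := by
  have ha : ∀ k : ℕ, 0 < (k : ℝ) + b := fun k => by positivity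
  have hinj : Function.Injective fun k : ℕ => ((k : ℝ) + b) ^ 3 := by
    intro i j h
    have := (pow_left_inj₀ (ha i).le (ha j).le (by norm_num)).1 h
    exact_mod_cast add_right_cancel this
  rw [setIntegral_congr_fun measurableSet_Ioi fun x hx =>
    prod_inv_partial_fractions (s := Finset.range (N + 1)) ⟨0, by simp⟩
      (c := fun k : ℕ => ((k : ℝ) + b) ^ 3) (fun k => pow_pos (ha k) 3) hinj
      (z := x ^ 3) (pow_nonneg (le_of_lt hx) 3)]
  rw [integral_finsetSum _ fun n _ => (integrable_inv_one_add_cube (ha n)).const_mul _,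
    Finset.mul_sum]
  refine Finset.sum_congr rfl fun n _ => ?_
  rw [integral_const_mul, integral_inv_one_add_cube (ha n), finRes]
  ring

lemma tendsto_sum_finRes {b : ℝ} (hb : 0 < b) :
    Tendsto (fun N => ∑ n ∈ Finset.range (N + 1), finRes b (N + 1) n) atTop
      (𝓝 (∑' n, cubicRes b n)) := by
  have h := tendsto_tsum_of_dominated_convergence (𝓕 := atTop)
    (f := fun N n => if n ∈ Finset.range (N + 1) then finRes b (N + 1) n else 0)
    (g := cubicRes b) (bound := fun n => |cubicRes b n|) (summable_cubicRes hb).abs ?_ ?_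
  · refine h.congr fun N => ?_
    rw [tsum_eq_sum (s := Finset.range (N + 1)) fun n hn => if_neg hn]
    exact Finset.sum_congr rfl fun n hn => if_pos hn
  · intro n
    refine (tendsto_finRes hb n).congr' ?_
    filter_upwards [eventually_ge_atTop n] with N hN
    rw [if_pos (Finset.mem_range.2 (by omega))]
  · refine Eventually.of_forall fun N n => ?_
    split_ifs with h
    · exact abs_finRes_le hb (Finset.mem_range.1 h)
    · simp

lemma tendsto_integral_prod {b : ℝ} (hb : 0 < b) :
    Tendsto (fun N => ∫ x in Ioi (0 : ℝ),
        (∏ k ∈ Finset.range (N + 1), (1 + x ^ 3 / ((k : ℝ) + b) ^ 3))⁻¹) atTop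
      (𝓝 (∫ x in Ioi (0 : ℝ), (∏' k : ℕ, (1 + x ^ 3 / ((k : ℝ) + b) ^ 3))⁻¹)) := by
  have hone : ∀ x : ℝ, 0 < x → ∀ k : ℕ, 1 ≤ 1 + x ^ 3 / ((k : ℝ) + b) ^ 3 := fun x hx k => by
    have : 0 ≤ x ^ 3 / ((k : ℝ) + b) ^ 3 := by positivity
    linarith
  refine tendsto_integral_of_dominated_convergence (fun x => (1 + x ^ 3 / b ^ 3)⁻¹)
    (fun N => ?_) (integrable_inv_one_add_cube hb) (fun N => ?_) ?_
  · exact Measurable.aestronglyMeasurable (by fun_prop)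
  · filter_upwards [ae_restrict_mem measurableSet_Ioi] with x hx
    have hx : 0 < x := hx
    have h1 : 1 ≤ ∏ k ∈ Finset.range N, (1 + x ^ 3 / (((k + 1 : ℕ) : ℝ) + b) ^ 3) :=
      Finset.one_le_prod fun k _ => hone x hx (k + 1)
    rw [Finset.prod_range_succ', Nat.cast_zero, zero_add]
    have h0 : 0 < 1 + x ^ 3 / b ^ 3 := by positivity
    rw [Real.norm_of_nonneg (by positivity)]
    exact inv_anti₀ h0 (le_mul_of_one_le_left h0.le h1)
  · filter_upwards [ae_restrict_mem measurableSet_Ioi] with x hx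
    have hx : 0 < x := hx
    have hs : Summable fun k : ℕ => x ^ 3 / ((k : ℝ) + b) ^ 3 := by
      have : Summable fun k : ℕ => 1 / |(k : ℝ) + b| ^ (3 : ℝ) :=
        Real.summable_one_div_nat_add_rpow b 3 |>.2 (by norm_num)
      refine (this.mul_left (x ^ 3)).congr fun k => ?_
      rw [abs_of_pos (by positivity), mul_one_div]
      norm_cast
    have hm := Real.multipliable_one_add_of_summable hs
    have ht := hm.hasProd.tendsto_prod_nat
    have hne : (∏' k : ℕ, (1 + x ^ 3 / ((k : ℝ) + b) ^ 3)) ≠ 0 := by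
      have : 1 ≤ ∏' k : ℕ, (1 + x ^ 3 / ((k : ℝ) + b) ^ 3) :=
        ge_of_tendsto' ht fun N => Finset.one_le_prod fun k _ => hone x hx k
      linarith
    exact (ht.inv₀ hne).comp (tendsto_add_atTop_nat 1)

/-! ### Comparison of the two sides -/

/-- For every real `b > 0`,
`∫₀^∞ dx / ∏_{k=0}^∞ (1 + x³/(k+b)³)
  = (4π Γ(3b))/(√3 Γ(b)³) · ∫_{-∞}^∞ e^{ib√3 x}/(eˣ + e⁻ˣ + e^{i√3 x})^{3b} dx`,
where the power in the right-hand integrand is the principal complex power. -/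
theorem stmt_10 (b : ℝ) (hb : 0 < b) :
    ((∫ x in Set.Ioi (0 : ℝ), (∏' k : ℕ, (1 + x ^ 3 / ((k : ℝ) + b) ^ 3))⁻¹ : ℝ) : ℂ)
      = (4 * Real.pi * Real.Gamma (3 * b) / (Real.sqrt 3 * Real.Gamma b ^ 3) : ℝ) *
        ∫ x : ℝ, Complex.exp (Complex.I * b * Real.sqrt 3 * x) /
          (Complex.exp x + Complex.exp (-x) +
            Complex.exp (Complex.I * Real.sqrt 3 * x)) ^ ((3 * b : ℝ) : ℂ) := by
  have hI := tendsto_integral_prod hb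
  simp only [integral_finite_prod hb] at hI
  rw [tendsto_nhds_unique hI ((tendsto_sum_finRes hb).const_mul _),
    ← (hasSum_cubicRes hb).tsum_eq, ← Complex.ofReal_tsum, tsum_mul_right, ← Complex.ofReal_mul]
  congr 1
  have h1 := Real.Gamma_pos_of_pos hb
  have h2 := Real.Gamma_pos_of_pos (show 0 < 3 * b by positivity)
  field_simp
  ring
end

section
/- $\int_{0}^{\infty} \frac{e^{\sqrt{3}\, x} \cos\left(\frac{\pi}{6} - x\right)}{\left(2\cos x + e^{\sqrt{3}\, x}\right)^{2}}\, dx = \frac{1}{6}$. -/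
/-!
Dividing numerator and denominator by `e^{2√3 x}` turns the integrand into
`e^{-√3 x} cos (π/6 - x) / u²` with `u = 1 + 2 e^{-√3 x} cos x`. Since
`√3 cos x + sin x = 2 cos (π/6 - x)`, the numerator is `-u'/4`, so `1 / (4u)` is an
antiderivative. It increases from `1/12` at `0` to `1/4` at infinity. Integrability follows from
the lower bound `u ≥ 1/3`, which makes the integrand at most `9 e^{-√3 x}`.
-/

open Filter Topology MeasureTheory

/-- The function `u = 1 + 2 e^{-√3 x} cos x`, the denominator `2 cos x + e^{√3 x}` divided by
`e^{√3 x}`. -/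
noncomputable def normDenom (x : ℝ) : ℝ :=
  1 + 2 * Real.exp (-Real.sqrt 3 * x) * Real.cos x

/-- Where `cos x < 0` one has `x > π / 2`, hence `e^{√3 x} ≥ 1 + √3 x ≥ 3`. -/
lemma one_third_le_normDenom {x : ℝ} (hx : 0 ≤ x) : 1 / 3 ≤ normDenom x := by
  unfold normDenom
  have he := Real.exp_pos (-Real.sqrt 3 * x)
  rcases le_or_gt 0 (Real.cos x) with hc | hc
  · have := mul_nonneg he.le hc
    linarith
  · have hx2 : Real.pi / 2 < x := by
      by_contra! h
      exact absurd (Real.cos_nonneg_of_mem_Icc ⟨by linarith [Real.pi_pos], h⟩) (not_le.2 hc)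
    have h3 : (1.7 : ℝ) ≤ Real.sqrt 3 := Real.le_sqrt_of_sq_le (by norm_num)
    have h1 : (3 : ℝ) ≤ Real.exp (Real.sqrt 3 * x) := by
      have := Real.add_one_le_exp (Real.sqrt 3 * x)
      nlinarith [Real.pi_gt_three]
    have h2 : Real.exp (-Real.sqrt 3 * x) ≤ 1 / 3 := by
      rw [neg_mul, Real.exp_neg, ← one_div]
      exact one_div_le_one_div_of_le (by norm_num) h1
    nlinarith [Real.neg_one_le_cos x]

lemma integrand_eq (x : ℝ) :
    Real.exp (Real.sqrt 3 * x) * Real.cos (Real.pi / 6 - x) /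
          (2 * Real.cos x + Real.exp (Real.sqrt 3 * x)) ^ 2
      = Real.exp (-Real.sqrt 3 * x) * Real.cos (Real.pi / 6 - x) / normDenom x ^ 2 := by
  have he := (Real.exp_pos (Real.sqrt 3 * x)).ne'
  have h : normDenom x = (2 * Real.cos x + Real.exp (Real.sqrt 3 * x)) /
      Real.exp (Real.sqrt 3 * x) := by
    rw [normDenom, neg_mul, Real.exp_neg]
    field_simp
    ring
  rw [h, neg_mul, Real.exp_neg, div_pow, div_div_eq_mul_div]
  congr 1
  field_simp

lemma hasDerivAt_antideriv {x : ℝ} (hx : 0 ≤ x) :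
    HasDerivAt (fun y => (4 * normDenom y)⁻¹)
      (Real.exp (-Real.sqrt 3 * x) * Real.cos (Real.pi / 6 - x) / normDenom x ^ 2) x := by
  have hu : normDenom x ≠ 0 := (by linarith [one_third_le_normDenom hx] : 0 < normDenom x).ne'
  have he : HasDerivAt (fun y => Real.exp (-Real.sqrt 3 * y))
      (Real.exp (-Real.sqrt 3 * x) * (-Real.sqrt 3 * 1)) x :=
    ((hasDerivAt_id x).const_mul _).exp
  have hd : HasDerivAt (fun y => 4 * normDenom y) _ x :=
    (((he.const_mul 2).mul (Real.hasDerivAt_cos x)).const_add 1).const_mul 4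
  refine (hd.inv (mul_ne_zero four_ne_zero hu)).congr_deriv ?_
  rw [Real.cos_sub, Real.cos_pi_div_six, Real.sin_pi_div_six]
  field_simp
  ring

lemma continuous_normDenom : Continuous normDenom := by
  unfold normDenom
  fun_prop

lemma integrableOn_integrand :
    IntegrableOn (fun x => Real.exp (-Real.sqrt 3 * x) * Real.cos (Real.pi / 6 - x) /
      normDenom x ^ 2) (Set.Ioi 0) := by
  have h0 : (0 : ℝ) < Real.sqrt 3 := by positivity
  refine Integrable.mono' ((exp_neg_integrableOn_Ioi 0 h0).const_mul 9) ?_ ?_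
  · have := continuous_normDenom.measurable
    exact Measurable.aestronglyMeasurable (by fun_prop)
  · filter_upwards [ae_restrict_mem measurableSet_Ioi] with x hx
    have hu := one_third_le_normDenom (le_of_lt hx)
    have he := Real.exp_pos (-Real.sqrt 3 * x)
    have hu2 : 1 / 9 ≤ normDenom x ^ 2 := by nlinarith
    rw [Real.norm_eq_abs, abs_div, abs_mul, abs_of_pos he, abs_of_nonneg (sq_nonneg (normDenom x)),
      div_le_iff₀ (by linarith)]
    nlinarith [Real.abs_cos_le_one (Real.pi / 6 - x)]

lemma tendsto_normDenom : Tendsto normDenom atTop (𝓝 1) := by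
  have h0 : (0 : ℝ) < Real.sqrt 3 := by positivity
  have he : Tendsto (fun x => 2 * Real.exp (-Real.sqrt 3 * x)) atTop (𝓝 0) := by
    simpa using (Real.tendsto_exp_atBot.comp
      (tendsto_id.const_mul_atTop_of_neg (neg_lt_zero.2 h0))).const_mul 2
  have hm : Tendsto (fun x => 2 * Real.exp (-Real.sqrt 3 * x) * Real.cos x) atTop (𝓝 0) := by
    refine squeeze_zero_norm (fun x => ?_) he
    rw [Real.norm_eq_abs, abs_mul, abs_of_pos (by positivity)]
    exact mul_le_of_le_one_right (by positivity) (Real.abs_cos_le_one x)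
  have h1 := hm.const_add 1
  rwa [add_zero] at h1

/-- `∫₀^∞ e^{√3 x} cos(π/6 - x) / (2 cos x + e^{√3 x})² dx = 1/6`. -/
theorem stmt_11 :
    ∫ x in Set.Ioi (0 : ℝ),
        Real.exp (Real.sqrt 3 * x) * Real.cos (Real.pi / 6 - x) /
          (2 * Real.cos x + Real.exp (Real.sqrt 3 * x)) ^ 2
      = 1 / 6 := by
  simp_rw [integrand_eq]
  rw [integral_Ioi_of_hasDerivAt_of_tendsto' (fun x hx => hasDerivAt_antideriv hx)
    integrableOn_integrand ((tendsto_normDenom.const_mul 4).inv₀ (by norm_num))]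
  norm_num [normDenom]
end
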